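/- arXiv:1001.4030 — 2 statements merged into one kernel-verified Lean document; each statement's English description precedes it below -/
import Mathlib

section
/- Let f : ℂ → ℂ be a polynomial of degree at least 2, let J(f) be the closure of the set of repelling periodic points of f, and let PC(f) be the closure of the union of the forward orbits {f^{∘n}(c) : n ≥ 1} over all critical points c of f. Then for every open set V ⊆ ℂ containing PC(f), Lebesgue-almost every point z ∈ J(f) has orbit eventually staying in V; that is, the set of z ∈ J(f) for which f^{∘n}(z) ∉ V for infinitely many n has two-dimensional Lebesgue measure zero. -/
open MeasureTheory Filter Polynomial

/-- The Julia set of `f` : the closure of the set of repelling periodic points. -/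
noncomputable def juliaSet (f : ℂ → ℂ) : Set ℂ :=
  closure {z : ℂ | ∃ n : ℕ, 1 ≤ n ∧ f^[n] z = z ∧ 1 < ‖deriv (f^[n]) z‖}

/-- The post-critical set of a polynomial `f`: the closure of the union of the forward
orbits of the critical points of `f`. -/
noncomputable def postCriticalPoly (f : Polynomial ℂ) : Set ℂ :=
  closure {w : ℂ | ∃ c : ℂ, (Polynomial.derivative f).eval c = 0 ∧
    ∃ n : ℕ, 1 ≤ n ∧ (fun z : ℂ => f.eval z)^[n] c = w}


/-- local covering: if `|L'| ≤ 2|L'(p)|` near `p`, the image contains a disc. -/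
theorem lyu_cover {L : ℂ → ℂ} {p : ℂ} {t : ℝ} (ht : 0 < t)
    (hL : DifferentiableOn ℂ L (Metric.ball p t)) (h0 : deriv L p ≠ 0)
    (hb : ∀ z ∈ Metric.ball p t, ‖deriv L z‖ ≤ 2 * ‖deriv L p‖) :
    Metric.ball (L p) (‖deriv L p‖ * t / 64) ⊆ L '' Metric.ball p t := by
  set M := ‖deriv L p‖ with hM
  have hMpos : 0 < M := norm_pos_iff.2 h0
  have hdL : DifferentiableOn ℂ (deriv L) (Metric.ball p t) := hL.deriv Metric.isOpen_ball
  -- second derivative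
  have h2 : ∀ z ∈ Metric.closedBall p (t/16), ‖deriv (deriv L) z‖ ≤ 4 * M / t := by
    intro z hz
    have hsub : Metric.closedBall z (t/2) ⊆ Metric.ball p t := by
      intro w hw
      rw [Metric.mem_closedBall] at hz hw
      rw [Metric.mem_ball]
      have := dist_triangle w z p
      linarith
    have := Complex.norm_deriv_le_of_forall_mem_sphere_norm_le (f := deriv L) (c := z)
      (R := t/2) (C := 2 * M) (by positivity)
      (hdL.diffContOnCl_ball hsub)
      (fun w hw => hb w (hsub (Metric.sphere_subset_closedBall hw)))
    calc _ ≤ _ := this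
      _ = _ := by field_simp; ring
  have h1 : ∀ z ∈ Metric.closedBall p (t/16), ‖deriv L z - deriv L p‖ ≤ M / 4 := by
    intro z hz
    have := (convex_closedBall p (t/16)).norm_image_sub_le_of_norm_deriv_le (𝕜 := ℂ) (f := deriv L)
      (C := 4 * M / t) (x := p) (y := z)
      (fun w hw => hdL.differentiableAt (Metric.isOpen_ball.mem_nhds
        (Metric.closedBall_subset_ball (by linarith) hw))) h2
      (Metric.mem_closedBall_self (by positivity)) hz
    have hz' : ‖z - p‖ ≤ t / 16 := by simpa [dist_eq_norm] using hz
    calc _ ≤ _ := this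
      _ ≤ 4 * M / t * (t/16) := by gcongr
      _ = _ := by field_simp; ring
  have h3 : ∀ z ∈ Metric.sphere p (t/16), M * t / 32 ≤ ‖L z - L p‖ := by
    intro z hz
    have hz1 := Metric.sphere_subset_closedBall hz
    have hz' : ‖z - p‖ = t / 16 := by simpa [dist_eq_norm] using hz
    have := (convex_closedBall p (t/16)).norm_image_sub_le_of_norm_hasDerivWithin_le (𝕜 := ℂ)
      (f := fun z => L z - deriv L p * z) (f' := fun z => deriv L z - deriv L p)
      (C := M / 4) (x := p) (y := z)
      (fun w hw => by
        have : HasDerivAt L (deriv L w) w := (hL.differentiableAt (Metric.isOpen_ball.mem_nhds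
          (Metric.closedBall_subset_ball (by linarith) hw))).hasDerivAt
        have h5 := (this.sub ((hasDerivAt_id w).const_mul (deriv L p))).hasDerivWithinAt (s := Metric.closedBall p (t/16))
        rw [mul_one] at h5
        exact h5) h1
      (Metric.mem_closedBall_self (by positivity)) hz1
    rw [hz'] at this
    have e : deriv L p * (z - p) = (L z - L p) -
      ((L z - deriv L p * z) - (L p - deriv L p * p)) := by ring
    have e2 : ‖deriv L p * (z - p)‖ = M * (t/16) := by rw [norm_mul, hz']
    rw [e] at e2
    have := norm_sub_le (L z - L p) ((L z - deriv L p * z) - (L p - deriv L p * p))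
    have : 0 < M * t := by positivity
    linarith
  have hcl : Metric.closedBall p (t/16) ⊆ Metric.ball p t :=
    Metric.closedBall_subset_ball (by linarith)
  have hev : ∀ᶠ z in nhdsWithin p {p}ᶜ, L z ≠ L p :=
    (hL.differentiableAt (Metric.isOpen_ball.mem_nhds
          (Metric.mem_ball_self ht))).hasDerivAt.eventually_ne h0
  have := DiffContOnCl.ball_subset_image_closedBall (f := L) (z₀ := p) (r := t/16)
    (ε := M * t / 32) (hL.diffContOnCl_ball hcl) (by positivity) h3
    (hev.frequently.filter_mono nhdsWithin_le_nhds)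
  refine (Metric.ball_subset_ball (by linarith)).trans (this.trans (Set.image_mono hcl))

/-- A weak form of Bloch's theorem. -/
theorem lyu_bloch {L : ℂ → ℂ} {x : ℂ} {r : ℝ} (hr : 0 < r)
    (hL : DifferentiableOn ℂ L (Metric.ball x r)) (h0 : deriv L x ≠ 0) :
    ∃ c, Metric.ball c (‖deriv L x‖ * r / 256) ⊆ L '' Metric.ball x r := by
  have hdL : DifferentiableOn ℂ (deriv L) (Metric.ball x r) := hL.deriv Metric.isOpen_ball
  have hcl : Metric.closedBall x (r/2) ⊆ Metric.ball x r :=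
    Metric.closedBall_subset_ball (by linarith)
  obtain ⟨p, hp, hmax⟩ := (isCompact_closedBall x (r/2)).exists_isMaxOn
    (f := fun p => ‖deriv L p‖ * (r/2 - ‖p - x‖))
    ⟨x, Metric.mem_closedBall_self (by positivity)⟩
    (((hdL.continuousOn.mono hcl).norm).mul (by fun_prop))
  have hD : 0 < ‖deriv L x‖ := norm_pos_iff.2 h0
  have hx := hmax (Metric.mem_closedBall_self (by positivity : (0:ℝ) ≤ r/2))
  simp only [sub_self, norm_zero, sub_zero, Set.mem_ofPred_eq] at hx
  have hp' : ‖p - x‖ ≤ r/2 := by simpa [dist_eq_norm] using hp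
  have hpos : 0 < ‖deriv L p‖ * (r/2 - ‖p - x‖) := lt_of_lt_of_le (by positivity) hx
  have hdp : 0 < ‖deriv L p‖ := by
    rcases (norm_nonneg (deriv L p)).eq_or_lt with h | h
    · rw [← h] at hpos; simp at hpos
    · exact h
  have ht : 0 < r/2 - ‖p - x‖ := (pos_iff_pos_of_mul_pos hpos).1 hdp
  set t := (r/2 - ‖p-x‖)/2 with htdef
  have hsub : Metric.ball p t ⊆ Metric.ball x r := by
    intro z hz
    rw [Metric.mem_ball, dist_eq_norm] at *
    have := norm_add_le (z - p) (p - x)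
    rw [sub_add_sub_cancel] at this
    linarith
  refine ⟨L p, (Metric.ball_subset_ball ?_).trans ((lyu_cover (p := p) (t := t) (by linarith)
    (hL.mono hsub) (norm_pos_iff.1 hdp) ?_).trans (Set.image_mono hsub))⟩
  · nlinarith
  · intro z hz
    rw [Metric.mem_ball, dist_eq_norm] at hz
    have h1 := norm_add_le (z - p) (p - x)
    rw [sub_add_sub_cancel] at h1
    have hz2 : z ∈ Metric.closedBall x (r/2) := by
      rw [Metric.mem_closedBall, dist_eq_norm]; linarith
    have := hmax hz2
    simp only [Set.mem_ofPred_eq] at this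
    have h2 : t ≤ r/2 - ‖z - x‖ := by linarith
    have h3 : ‖deriv L z‖ * t ≤ (2 * ‖deriv L p‖) * t := by
      calc _ ≤ ‖deriv L z‖ * (r/2 - ‖z - x‖) := by gcongr
        _ ≤ _ := this
        _ = _ := by rw [htdef]; ring
    exact le_of_mul_le_mul_right h3 (by linarith)

/-- Weak Koebe. -/
theorem lyu_koebe {g : ℂ → ℂ} {x a : ℂ} {r : ℝ} (hr : 0 < r)
    (hg : DifferentiableOn ℂ g (Metric.ball x r)) (hi : Set.InjOn g (Metric.ball x r))
    (ha : ∀ z ∈ Metric.ball x r, g z ≠ a) :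
    ‖deriv g x‖ * r ≤ 2000 * ‖g x - a‖ := by
  have hx : x ∈ Metric.ball x r := Metric.mem_ball_self hr
  have hne : ∀ z ∈ Metric.ball x r, g z - a ≠ 0 := fun z hz => sub_ne_zero.2 (ha z hz)
  have hdg : DifferentiableOn ℂ (deriv g) (Metric.ball x r) := hg.deriv Metric.isOpen_ball
  have hga : ∀ z ∈ Metric.ball x r, HasDerivAt g (deriv g z) z := fun z hz =>
    (hg.differentiableAt (Metric.isOpen_ball.mem_nhds hz)).hasDerivAt
  obtain ⟨L, hLx, hL⟩ := ((hdg.div (hg.sub_const a) hne).isExactOn_ball).with_val_at x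
    (Complex.log (g x - a))
  have hexp : ∀ z ∈ Metric.ball x r, Complex.exp (L z) = g z - a := by
    intro z hz
    have hc : ∀ w ∈ Metric.ball x r, HasDerivAt (fun w => Complex.exp (- L w) * (g w - a)) 0 w := by
      intro w hw
      have := ((hL w hw).neg.cexp).mul ((hga w hw).sub_const a)
      refine this.congr_deriv ?_
      have := hne w hw
      simp only [Pi.div_apply]
      field_simp
      ring
    have := (convex_ball x r).is_const_of_fderivWithin_eq_zero (𝕜 := ℂ) (f := fun w => Complex.exp (- L w) * (g w - a))
      (fun w hw => (hc w hw).differentiableAt.differentiableWithinAt)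
      (fun w hw => by
        rw [fderivWithin_of_isOpen Metric.isOpen_ball hw]
        have := (hc w hw).hasFDerivAt.fderiv
        simpa using this) hz hx
    simp only [hLx] at this
    rw [Complex.exp_neg, Complex.exp_neg, Complex.exp_log (hne x hx), inv_mul_cancel₀ (hne x hx)] at this
    have h2 := Complex.exp_ne_zero (L z)
    field_simp at this
    exact this.symm
  have hdL : deriv L x = deriv g x / (g x - a) := (hL x hx).deriv
  by_cases h0 : deriv g x = 0
  · rw [h0]; simp
  have h0' : deriv L x ≠ 0 := by rw [hdL]; exact div_ne_zero h0 (hne x hx)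
  obtain ⟨c, hc⟩ := lyu_bloch hr (fun z hz => (hL z hz).differentiableAt.differentiableWithinAt) h0'
  have key : ‖deriv L x‖ * r / 256 ≤ 2 * Real.pi := by
    by_contra! hlt
    have hpi := Real.pi_pos
    obtain ⟨p, hp, hpc⟩ := hc (Metric.mem_ball_self (by linarith) : c ∈ _)
    have : c + 2 * Real.pi * Complex.I ∈ Metric.ball c (‖deriv L x‖ * r / 256) := by
      rw [Metric.mem_ball, dist_eq_norm]
      simpa [abs_of_pos hpi] using hlt
    obtain ⟨q, hq, hqc⟩ := hc this
    have e : g q = g p := by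
      have h1 := hexp q hq
      have h2 := hexp p hp
      rw [hqc, Complex.exp_periodic, ← hpc, h2] at h1
      exact (sub_left_inj.1 h1).symm
    have := hi hq hp e
    rw [this, hpc] at hqc
    have h3 := left_eq_add.1 hqc
    exact Complex.two_pi_I_ne_zero h3
  have hgx : 0 < ‖g x - a‖ := norm_pos_iff.2 (hne x hx)
  rw [hdL, norm_div] at key
  have hpi : Real.pi < 3.15 := Real.pi_lt_d2
  have : ‖deriv g x‖ / ‖g x - a‖ * r = ‖deriv g x‖ * r / ‖g x - a‖ := by ring
  rw [this, div_div, div_le_iff₀ (by positivity)] at key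
  nlinarith

/-- exp of a log: a non-vanishing function with bounded logarithmic derivative. -/
theorem lyu_logbound {q : ℂ → ℂ} {y p : ℂ} {ρ A : ℝ} (hρ : 0 < ρ) {r : ℝ} (hr : ρ < r)
    (hq : DifferentiableOn ℂ q (Metric.ball y r)) (hne : ∀ z ∈ Metric.ball y r, q z ≠ 0)
    (hb : ∀ z ∈ Metric.sphere y ρ, ‖deriv q z / q z‖ ≤ A / ρ) (hp : p ∈ Metric.closedBall y ρ) :
    ‖q p‖ ≤ Real.exp A * ‖q y‖ := by
  have hy : y ∈ Metric.ball y r := Metric.mem_ball_self (hρ.trans hr)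
  have hcl : Metric.closedBall y ρ ⊆ Metric.ball y r := Metric.closedBall_subset_ball hr
  have hdq : DifferentiableOn ℂ (deriv q) (Metric.ball y r) := hq.deriv Metric.isOpen_ball
  have hlog : DifferentiableOn ℂ (fun z => deriv q z / q z) (Metric.ball y r) := hdq.div hq hne
  have hqd : ∀ z ∈ Metric.ball y r, HasDerivAt q (deriv q z) z := fun z hz =>
    (hq.differentiableAt (Metric.isOpen_ball.mem_nhds hz)).hasDerivAt
  have hb' : ∀ z ∈ Metric.closedBall y ρ, ‖deriv q z / q z‖ ≤ A / ρ := by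
    intro z hz
    refine Complex.norm_le_of_forall_mem_frontier_norm_le Metric.isBounded_ball
      (hlog.diffContOnCl_ball hcl) ?_ (by rwa [closure_ball _ hρ.ne'])
    intro w hw
    rw [frontier_ball _ hρ.ne'] at hw
    exact hb w hw
  obtain ⟨L, hLx, hL⟩ := hlog.isExactOn_ball.with_val_at y 0
  have hexp : q p = Complex.exp (L p) * q y := by
    have hc : ∀ w ∈ Metric.ball y r, HasDerivAt (fun w => Complex.exp (- L w) * q w) 0 w := by
      intro w hw
      have := ((hL w hw).neg.cexp).mul (hqd w hw)
      refine this.congr_deriv ?_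
      have := hne w hw
      field_simp
      ring
    have := (convex_ball y r).is_const_of_fderivWithin_eq_zero (𝕜 := ℂ)
      (f := fun w => Complex.exp (- L w) * q w)
      (fun w hw => (hc w hw).differentiableAt.differentiableWithinAt)
      (fun w hw => by
        rw [fderivWithin_of_isOpen Metric.isOpen_ball hw]
        have := (hc w hw).hasFDerivAt.fderiv
        simpa using this) (hcl hp) hy
    simp only [hLx, neg_zero, Complex.exp_zero, one_mul] at this
    rw [← this, ← mul_assoc, ← Complex.exp_add]
    simp
  have hLp : ‖L p‖ ≤ A := by
    have := (convex_closedBall y ρ).norm_image_sub_le_of_norm_hasDerivWithin_le (𝕜 := ℂ)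
      (f := L) (C := A / ρ) (fun w hw => (hL w (hcl hw)).hasDerivWithinAt) hb'
      (Metric.mem_closedBall_self hρ.le) hp
    rw [hLx, sub_zero] at this
    have hA : 0 ≤ A / ρ := (norm_nonneg _).trans (hb' y (Metric.mem_closedBall_self hρ.le))
    have hp' : ‖p - y‖ ≤ ρ := by simpa [dist_eq_norm] using hp
    calc _ ≤ _ := this
      _ ≤ A / ρ * ρ := by gcongr
      _ = A := by field_simp
  rw [hexp, norm_mul]
  gcongr
  rw [Complex.norm_exp]
  exact Real.exp_le_exp.2 ((Complex.re_le_norm _).trans hLp)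

theorem lyu_lower {g : ℂ → ℂ} {y : ℂ} {r : ℝ} 
    (hg : DifferentiableOn ℂ g (Metric.ball y (4 * r))) (hi : Set.InjOn g (Metric.ball y (4 * r)))
    {x p : ℂ} (hx : x ∈ Metric.ball y r) (hp : p ∈ Metric.ball y r) :
    ‖deriv g x‖ * ‖x - p‖ ≤ 2000 * ‖g x - g p‖ := by
  rcases eq_or_ne x p with rfl | hne
  · simp
  have hpos : 0 < ‖x - p‖ := norm_pos_iff.2 (sub_ne_zero.2 hne)
  rw [Metric.mem_ball, dist_eq_norm] at hx hp
  have hxp : ‖x - p‖ < 2 * r := by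
    have := norm_sub_le (x - y) (p - y)
    rw [sub_sub_sub_cancel_right] at this
    linarith
  have hsub : Metric.ball x ‖x - p‖ ⊆ Metric.ball y (4 * r) := by
    intro z hz
    rw [Metric.mem_ball, dist_eq_norm] at *
    have := norm_add_le (z - x) (x - y)
    rw [sub_add_sub_cancel] at this
    linarith
  refine lyu_koebe hpos (hg.mono hsub) (hi.mono hsub) ?_
  intro z hz h
  have hp4 : p ∈ Metric.ball y (4 * r) := by
    rw [Metric.mem_ball, dist_eq_norm]; linarith [norm_nonneg (p - y)]
  have := hi (hsub hz) hp4 h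
  rw [this, Metric.mem_ball, dist_eq_norm, norm_sub_rev] at hz
  exact lt_irrefl _ hz

theorem lyu_deriv_ne {g : ℂ → ℂ} {y : ℂ} {r : ℝ} (hr : 0 < r)
    (hg : DifferentiableOn ℂ g (Metric.ball y (4 * r))) (hi : Set.InjOn g (Metric.ball y (4 * r)))
    (h0 : deriv g y ≠ 0) {p : ℂ} (hp : p ∈ Metric.ball y r) :
    ‖g p - g y‖ ≤ Real.exp 2001 * ‖deriv g y‖ * ‖p - y‖ := by
  rcases eq_or_ne p y with rfl | hpy
  · simp
  have hsub : Metric.ball y r ⊆ Metric.ball y (4 * r) := Metric.ball_subset_ball (by linarith)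
  have hρ : 0 < ‖p - y‖ := norm_pos_iff.2 (sub_ne_zero.2 hpy)
  have hρr : ‖p - y‖ < r := by rwa [Metric.mem_ball, dist_eq_norm] at hp
  have hy : y ∈ Metric.ball y r := Metric.mem_ball_self hr
  have hq : DifferentiableOn ℂ (dslope g y) (Metric.ball y r) :=
    (Complex.differentiableOn_dslope (Metric.ball_mem_nhds y hr)).2 (hg.mono hsub)
  have hqz : ∀ z, z ≠ y → dslope g y z = (g z - g y) / (z - y) := by
    intro z hz
    rw [dslope_of_ne _ hz, slope_def_field]
  have := lyu_logbound (q := dslope g y) (p := p) (A := 2001) hρ hρr hq ?_ ?_ ?_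
  · rw [hqz p hpy, dslope_same, norm_div, div_le_iff₀ hρ] at this
    exact this
  · intro z hz
    rcases eq_or_ne z y with rfl | hzy
    · rwa [dslope_same]
    · rw [hqz z hzy]
      refine div_ne_zero (sub_ne_zero.2 fun h => hzy (hi (hsub hz) (hsub hy) h)) (sub_ne_zero.2 hzy)
  · intro z hz
    have hzn : ‖z - y‖ = ‖p - y‖ := by simpa [dist_eq_norm] using hz
    have hzy : z ≠ y := by
      rintro rfl; simp at hzn; exact hρ.ne hzn
    have hzr : z ∈ Metric.ball y r := by rw [Metric.mem_ball, dist_eq_norm, hzn]; exact hρr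
    have hzs : z - y ≠ 0 := sub_ne_zero.2 hzy
    have hgs : g z - g y ≠ 0 := sub_ne_zero.2 fun h => hzy (hi (hsub hzr) (hsub hy) h)
    have hd : HasDerivAt (dslope g y)
        ((deriv g z * (z - y) - (g z - g y) * 1) / (z - y)^2) z := by
      have h1 : HasDerivAt g (deriv g z) z := (hg.differentiableAt
        (Metric.isOpen_ball.mem_nhds (hsub hzr))).hasDerivAt
      have h2 := (h1.sub_const (g y)).div ((hasDerivAt_id z).sub_const y) hzs
      refine h2.congr_of_eventuallyEq ?_
      filter_upwards [isOpen_ne.mem_nhds hzy] with w hw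
      rw [hqz w hw]; rfl
    rw [hd.deriv, hqz z hzy]
    have e : (deriv g z * (z - y) - (g z - g y) * 1) / (z - y)^2 / ((g z - g y) / (z - y)) =
      deriv g z / (g z - g y) - 1 / (z - y) := by field_simp
    rw [e]
    have h3 := lyu_lower hg hi hzr hy
    refine (norm_sub_le _ _).trans ?_
    rw [norm_div, norm_div, norm_one, ← hzn]
    have hzpos : 0 < ‖z - y‖ := norm_pos_iff.2 hzs
    have hgpos : 0 < ‖g z - g y‖ := norm_pos_iff.2 hgs
    have h4 : ‖deriv g z‖ / ‖g z - g y‖ ≤ 2000 / ‖z - y‖ := by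
      rw [div_le_div_iff₀ hgpos hzpos]; exact h3
    calc _ ≤ 2000 / ‖z - y‖ + 1 / ‖z - y‖ := by gcongr
      _ = _ := by ring
  · simp [dist_eq_norm]

theorem lyu_inverse (P : ℂ[X]) {y z : ℂ} {δ : ℝ} (hδ : 0 < δ) (hz : P.eval z = y)
    (hcrit : ∀ c, P.derivative.eval c = 0 → P.eval c ∉ Metric.ball y δ) :
    ∃ g : ℂ → ℂ, DifferentiableOn ℂ g (Metric.ball y δ) ∧ g y = z ∧
      (∀ p ∈ Metric.ball y δ, P.eval (g p) = p) ∧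
      (∀ p ∈ Metric.ball y δ, deriv g p ≠ 0) := by
  classical
  have hy : y ∈ Metric.ball y δ := Metric.mem_ball_self hδ
  have : ContractibleSpace (Metric.ball y δ) :=
    (convex_ball y δ).contractibleSpace ⟨y, hy⟩
  have : LocallyPathConnectedSpace (Metric.ball y δ) :=
    Metric.isOpen_ball.locallyPathConnectedSpace
  obtain ⟨F, ⟨hF0, hF⟩, -⟩ := P.isCoveringMapOn_eval.existsUnique_continuousMap_lifts
    (A := Metric.ball y δ) (a₀ := ⟨y, hy⟩) (e₀ := z) ⟨Subtype.val, by fun_prop⟩ hz (by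
      rintro ⟨a, ha⟩ ⟨c, hc, hca⟩
      exact hcrit c hc (by rw [show P.eval c = a from hca]; exact ha))
  let g : ℂ → ℂ := fun p => if h : p ∈ Metric.ball y δ then F ⟨p, h⟩ else 0
  have hgF : ∀ p (h : p ∈ Metric.ball y δ), g p = F ⟨p, h⟩ := fun p h => by simp only [g, dif_pos h]
  have hPg : ∀ p ∈ Metric.ball y δ, P.eval (g p) = p := by
    intro p hp
    rw [hgF p hp]
    exact congrFun hF ⟨p, hp⟩
  have hgc : ContinuousOn g (Metric.ball y δ) := by
    rw [continuousOn_iff_continuous_domRestrict]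
    have : (Metric.ball y δ).domRestrict g = F := by
      ext ⟨p, hp⟩; exact hgF p hp
    rw [this]; exact F.continuous
  have hder : ∀ p ∈ Metric.ball y δ, HasDerivAt g (P.derivative.eval (g p))⁻¹ p ∧
      P.derivative.eval (g p) ≠ 0 := by
    intro p hp
    have hne : P.derivative.eval (g p) ≠ 0 := fun h => hcrit _ h (by rw [hPg p hp]; exact hp)
    refine ⟨HasDerivAt.of_local_left_inverse
      (hgc.continuousAt (Metric.isOpen_ball.mem_nhds hp)) (P.hasDerivAt _) hne ?_, hne⟩
    filter_upwards [Metric.isOpen_ball.mem_nhds hp] with w hw using hPg w hw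
  refine ⟨g, fun p hp => (hder p hp).1.differentiableAt.differentiableWithinAt, ?_, hPg, ?_⟩
  · rw [hgF y hy, hF0]
  · intro p hp
    rw [(hder p hp).1.deriv]
    exact inv_ne_zero (hder p hp).2

theorem lyu_det (a : ℂ) : |((ContinuousLinearMap.toSpanSingleton ℂ a).restrictScalars ℝ).det|
    = ‖a‖ ^ 2 := by
  have h : ((ContinuousLinearMap.toSpanSingleton ℂ a).restrictScalars ℝ).det
      = Algebra.norm ℝ a := by
    rw [Algebra.norm_apply]
    change LinearMap.det _ = _
    congr 1
    apply LinearMap.ext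
    intro x
    simp [mul_comm]
  rw [h, Algebra.norm_complex_apply, Complex.normSq_eq_norm_sq, abs_of_nonneg (by positivity)]

theorem lyu_vol {g : ℂ → ℂ} {U A : Set ℂ} (hU : IsOpen U) (hg : DifferentiableOn ℂ g U)
    (hi : Set.InjOn g U) (hA : MeasurableSet A) (hAU : A ⊆ U) {m : ℝ} (hm : 0 ≤ m)
    (hb : ∀ p ∈ A, m ≤ ‖deriv g p‖) :
    ENNReal.ofReal (m ^ 2) * volume A ≤ volume (g '' A) := by
  rw [← lintegral_abs_det_fderiv_eq_addHaar_image volume hA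
    (f' := fun p => (ContinuousLinearMap.toSpanSingleton ℂ (deriv g p)).restrictScalars ℝ)
    (fun p hp => ((hg.differentiableAt (hU.mem_nhds
      (hAU hp))).hasDerivAt.hasFDerivAt.restrictScalars ℝ).hasFDerivWithinAt) (hi.mono hAU)]
  rw [← setLIntegral_const]
  refine setLIntegral_mono' hA fun p hp => ?_
  rw [lyu_det]
  have := hb p hp
  gcongr

theorem lyu_eval_iter (f : ℂ[X]) (n : ℕ) (z : ℂ) :
    (f.comp^[n] X).eval z = (fun w : ℂ => f.eval w)^[n] z := by
  rw [Polynomial.iterate_comp_eval]; simp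

theorem lyu_diff_iter (f : ℂ[X]) (n : ℕ) : Differentiable ℂ ((fun w : ℂ => f.eval w)^[n]) := by
  have : (fun w : ℂ => f.eval w)^[n] = fun z => (f.comp^[n] X).eval z := by
    ext z; rw [lyu_eval_iter]
  rw [this]; exact Polynomial.differentiable _

theorem lyu_deriv_add (f : ℂ[X]) (m n : ℕ) (z : ℂ) :
    deriv ((fun w : ℂ => f.eval w)^[m + n]) z =
      deriv ((fun w : ℂ => f.eval w)^[m]) ((fun w : ℂ => f.eval w)^[n] z) *
      deriv ((fun w : ℂ => f.eval w)^[n]) z := by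
  rw [Function.iterate_add]
  exact deriv_comp z (lyu_diff_iter f m).differentiableAt (lyu_diff_iter f n).differentiableAt

theorem lyu_crit (f : ℂ[X]) (n : ℕ) : ∀ c : ℂ, deriv ((fun w : ℂ => f.eval w)^[n]) c = 0 →
    (fun w : ℂ => f.eval w)^[n] c ∈ postCriticalPoly f := by
  induction n with
  | zero => intro c hc; simp at hc
  | succ n ih =>
    intro c hc
    rw [lyu_deriv_add, mul_eq_zero] at hc
    rcases hc with hc | hc
    · rw [Function.iterate_add_apply]; exact ih _ hc
    · refine subset_closure ⟨c, ?_, n + 1, by omega, rfl⟩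
      simpa using hc

theorem lyu_escape (f : ℂ[X]) (hdeg : 2 ≤ f.natDegree) :
    ∃ R : ℝ, 0 < R ∧ ∀ z : ℂ, R < ‖z‖ → ‖z‖ < ‖f.eval z‖ := by
  have hd : 0 < f.divX.degree := by
    rw [← Polynomial.natDegree_pos_iff_degree_pos, Polynomial.natDegree_divX_eq_natDegree_tsub_one]
    omega
  have h := f.divX.tendsto_norm_atTop hd (l := Bornology.cobounded ℂ) (z := id)
    tendsto_norm_cobounded_atTop
  have h2 := h.eventually_gt_atTop (1 + ‖f.coeff 0‖)
  obtain ⟨R, hR⟩ := (Metric.hasBasis_cobounded_compl_closedBall (0:ℂ)).eventually_iff.1 h2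
  refine ⟨max R 1, by positivity, fun z hz => ?_⟩
  have hz1 : R < ‖z‖ := (le_max_left _ _).trans_lt hz
  have hz2 : 1 < ‖z‖ := (le_max_right _ _).trans_lt hz
  have h3 := hR.2 (x := z) (by simpa using hz1)
  simp only [id] at h3
  have e : f.eval z = f.divX.eval z * z + f.coeff 0 := by
    conv_lhs => rw [← f.divX_mul_X_add]
    simp
  have h4 : ‖f.divX.eval z * z‖ ≤ ‖f.eval z‖ + ‖f.coeff 0‖ := by
    rw [show f.divX.eval z * z = f.eval z - f.coeff 0 by rw [e]; ring]
    exact norm_sub_le _ _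
  rw [norm_mul] at h4
  nlinarith [norm_nonneg (f.coeff 0)]

theorem lyu_bounded (f : ℂ[X]) (hdeg : 2 ≤ f.natDegree) :
    ∃ R : ℝ, 0 < R ∧ juliaSet (fun w : ℂ => f.eval w) ⊆ Metric.closedBall 0 R := by
  obtain ⟨R, hR0, hR⟩ := lyu_escape f hdeg
  refine ⟨R, hR0, closure_minimal ?_ Metric.isClosed_closedBall⟩
  rintro z ⟨n, hn, hz, -⟩
  by_contra hzR
  have hzR : R < ‖z‖ := by simpa using hzR
  have : ∀ k, ‖z‖ ≤ ‖(fun w : ℂ => f.eval w)^[k] z‖ ∧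
      ‖z‖ < ‖(fun w : ℂ => f.eval w)^[k + 1] z‖ := by
    intro k
    induction k with
    | zero => exact ⟨le_rfl, hR z hzR⟩
    | succ k ih =>
      refine ⟨ih.2.le, ?_⟩
      rw [Function.iterate_succ_apply']
      exact ih.2.trans (hR _ (hzR.trans ih.2))
  obtain ⟨k, rfl⟩ : ∃ k, n = k + 1 := ⟨n - 1, by omega⟩
  have := (this k).2
  rw [hz] at this
  exact lt_irrefl _ this

theorem lyu_maps (f : ℂ[X]) : Set.MapsTo (fun w : ℂ => f.eval w)
    (juliaSet (fun w : ℂ => f.eval w)) (juliaSet (fun w : ℂ => f.eval w)) := by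
  refine Set.MapsTo.closure ?_ f.continuous
  rintro z ⟨n, hn, hz, hd⟩
  refine ⟨n, hn, ?_, ?_⟩
  · change (fun w : ℂ => f.eval w)^[n] ((fun w : ℂ => f.eval w) z) = (fun w : ℂ => f.eval w) z
    rw [← Function.iterate_succ_apply, Function.iterate_succ_apply', hz]
  · obtain ⟨k, rfl⟩ : ∃ k, n = k + 1 := ⟨n - 1, by omega⟩
    have h0 : deriv ((fun w : ℂ => f.eval w)^[1]) z ≠ 0 := by
      intro h
      rw [lyu_deriv_add, h] at hd
      simp at hd
      linarith
    have h1 := lyu_deriv_add f (k + 1) 1 z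
    rw [add_comm (k + 1) 1, lyu_deriv_add f 1 (k + 1) z, hz, mul_comm] at h1
    have := mul_right_cancel₀ h0 h1
    rw [this] at hd
    exact hd

theorem lyu_maps_iter (f : ℂ[X]) (n : ℕ) {z : ℂ} (hz : z ∈ juliaSet (fun w : ℂ => f.eval w)) :
    (fun w : ℂ => f.eval w)^[n] z ∈ juliaSet (fun w : ℂ => f.eval w) :=
  (lyu_maps f).iterate n hz

theorem lyu_repel (f : ℂ[X]) {p : ℂ} {m : ℕ} (hm : 1 ≤ m)
    (hp : (fun w : ℂ => f.eval w)^[m] p = p)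
    (hd : 1 < ‖deriv ((fun w : ℂ => f.eval w)^[m]) p‖) {s R : ℝ} (hs : 0 < s) (hR : 0 < R)
    {N : Set ℕ} (hN : N.Infinite)
    (hb : ∀ n ∈ N, ∀ z ∈ Metric.ball p s, ‖(fun w : ℂ => f.eval w)^[n] z‖ ≤ R) : False := by
  have hcont : ∀ j, Continuous (deriv ((fun w : ℂ => f.eval w)^[j])) := fun j => by
    have : Differentiable ℂ (deriv ((fun w : ℂ => f.eval w)^[j])) := by
      have := (lyu_diff_iter f j).differentiableOn.deriv isOpen_univ
      exact differentiableOn_univ.1 this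
    exact this.continuous
  have hA : ∀ j, ∃ A : ℝ, ∀ q ∈ Metric.closedBall (0:ℂ) R,
      ‖deriv ((fun w : ℂ => f.eval w)^[j]) q‖ ≤ A := fun j =>
    (isCompact_closedBall (0:ℂ) R).exists_bound_of_continuousOn (hcont j).continuousOn
  choose A hA using hA
  have hA0 : ∀ j, 0 ≤ A j := fun j => (norm_nonneg _).trans
    (hA j 0 (Metric.mem_closedBall_self hR.le))
  set B := ∑ j ∈ Finset.range (m + 1), A j with hB
  obtain ⟨k₀, hk₀⟩ := pow_unbounded_of_one_lt (B * (R / (s/2))) hd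
  obtain ⟨n, hnN, hn⟩ := hN.exists_gt (m * k₀)
  have hcauchy : ‖deriv ((fun w : ℂ => f.eval w)^[n]) p‖ ≤ R / (s/2) := by
    refine Complex.norm_deriv_le_of_forall_mem_sphere_norm_le (by positivity)
      (lyu_diff_iter f n).diffContOnCl fun z hz => hb n hnN z ?_
    exact Metric.closedBall_subset_ball (by linarith) (Metric.sphere_subset_closedBall hz)
  have hk : k₀ ≤ n / m := (Nat.le_div_iff_mul_le (by omega)).2 (by rw [mul_comm]; exact hn.le)
  have hlt : n < m * (n / m + 1) := by
    have := Nat.lt_mul_div_succ n (show 0 < m by omega)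
    simpa using this
  have hle : m * (n / m + 1) - n ≤ m := by
    have := Nat.mul_div_le n m
    rw [mul_add]; omega
  set j := m * (n / m + 1) - n with hj
  have hpow : deriv ((fun w : ℂ => f.eval w)^[m * (n / m + 1)]) p =
      (deriv ((fun w : ℂ => f.eval w)^[m]) p) ^ (n / m + 1) := by
    rw [Function.iterate_mul]
    exact (HasDerivAt.iterate _ (lyu_diff_iter f m).differentiableAt.hasDerivAt hp (n / m + 1)).deriv
  have hsum : m * (n / m + 1) = j + n := by omega
  rw [hsum, lyu_deriv_add] at hpow
  have h1 : ‖deriv ((fun w : ℂ => f.eval w)^[j]) ((fun w : ℂ => f.eval w)^[n] p)‖ ≤ B := by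
    refine (hA j _ ?_).trans ?_
    · simpa using hb n hnN p (Metric.mem_ball_self hs)
    · exact Finset.single_le_sum (f := A) (fun i _ => hA0 i) (Finset.mem_range.2 (by omega))
  have h2 := congrArg norm hpow
  rw [norm_mul, norm_pow] at h2
  have h3 : ‖deriv ((fun w : ℂ => f.eval w)^[m]) p‖ ^ k₀ ≤
      ‖deriv ((fun w : ℂ => f.eval w)^[m]) p‖ ^ (n / m + 1) :=
    pow_le_pow_right₀ hd.le (by omega)
  have h4 : ‖deriv ((fun w : ℂ => f.eval w)^[j]) ((fun w : ℂ => f.eval w)^[n] p)‖ *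
      ‖deriv ((fun w : ℂ => f.eval w)^[n]) p‖ ≤ B * (R / (s/2)) :=
    mul_le_mul h1 hcauchy (norm_nonneg _) ((norm_nonneg _).trans h1)
  linarith

/-- Near a Julia point, no infinite subfamily of iterates is uniformly bounded. -/
theorem lyu_julia_repel (f : ℂ[X]) {z : ℂ} (hz : z ∈ juliaSet (fun w : ℂ => f.eval w))
    {s R : ℝ} (hs : 0 < s) (hR : 0 < R) {N : Set ℕ} (hN : N.Infinite)
    (hb : ∀ n ∈ N, ∀ w ∈ Metric.ball z s, ‖(fun w : ℂ => f.eval w)^[n] w‖ ≤ R) : False := by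
  obtain ⟨p, ⟨m, hm, hp, hd⟩, hpz⟩ := Metric.mem_closure_iff.1 hz s hs
  obtain ⟨s', hs', hsub⟩ := Metric.isOpen_iff.1 Metric.isOpen_ball p
    (show p ∈ Metric.ball z s by rwa [Metric.mem_ball, dist_comm])
  exact lyu_repel f hm hp hd hs' hR hN fun n hn w hw => hb n hn w (hsub hw)

theorem lyu_measure_lower (f : ℂ[X]) (hdeg : 2 ≤ f.natDegree) {r : ℝ} (hr : 0 < r) :
    ∃ m : ENNReal, 0 < m ∧ ∀ y ∈ juliaSet (fun w : ℂ => f.eval w),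
      m ≤ volume (Metric.ball y r \ juliaSet (fun w : ℂ => f.eval w)) := by
  obtain ⟨R, hR0, hR⟩ := lyu_bounded f hdeg
  set J := juliaSet (fun w : ℂ => f.eval w) with hJ
  have hJcl : IsClosed J := isClosed_closure
  have hJc : IsCompact J := (isCompact_closedBall 0 R).of_isClosed_subset hJcl hR
  obtain ⟨t, htJ, htf, htc⟩ := hJc.finite_cover_balls (half_pos hr)
  have hpos : ∀ x ∈ J, 0 < volume (Metric.ball x (r/2) \ J) := by
    intro x hx
    refine (Metric.isOpen_ball.sdiff hJcl).measure_pos _ ?_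
    by_contra hne
    rw [Set.not_nonempty_iff_eq_empty, Set.sdiff_eq_empty] at hne
    refine lyu_julia_repel f hx (half_pos hr) hR0 Set.infinite_univ fun n _ w hw => ?_
    simpa using hR (lyu_maps_iter f n (hne hw))
  refine ⟨htf.toFinset.inf fun x => volume (Metric.ball x (r/2) \ J), ?_, ?_⟩
  · rw [Finset.lt_inf_iff (by simp)]
    intro x hx
    exact hpos x (htJ (htf.mem_toFinset.1 hx))
  · intro y hy
    obtain ⟨x, hxt, hyx⟩ := Set.mem_iUnion₂.1 (htc hy)
    refine (Finset.inf_le (htf.mem_toFinset.2 hxt)).trans (measure_mono ?_)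
    refine Set.sdiff_subset_sdiff_left (Metric.ball_subset_ball' ?_)
    rw [Metric.mem_ball, dist_comm] at hyx
    linarith

theorem lyu_branch (f : ℂ[X]) {z : ℂ} {n : ℕ} {r : ℝ} (hr : 0 < r)
    (hPC : Disjoint (Metric.ball ((fun w : ℂ => f.eval w)^[n] z) (8 * r)) (postCriticalPoly f))
    {m : ENNReal} (hm : m ≤ volume (Metric.ball ((fun w : ℂ => f.eval w)^[n] z) r \
      juliaSet (fun w : ℂ => f.eval w))) :
    ∃ a : ℝ, 0 < a ∧
      (∀ w ∈ Metric.ball z (a * r / 8000),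
        (fun w : ℂ => f.eval w)^[n] w ∈ Metric.closedBall ((fun w : ℂ => f.eval w)^[n] z) r) ∧
      ENNReal.ofReal ((a / (2000 * Real.exp 2001)) ^ 2) * m ≤
        volume (Metric.closedBall z (Real.exp 2001 * a * r) \
          juliaSet (fun w : ℂ => f.eval w)) := by
  set y := (fun w : ℂ => f.eval w)^[n] z with hy
  have h8 : 0 < 8 * r := by linarith
  obtain ⟨g, hg, hgy, hPg, hg0⟩ := lyu_inverse (f.comp^[n] X) (y := y) (z := z) h8
    (lyu_eval_iter f n z) (by
      intro c hc hcb
      refine Set.disjoint_left.1 hPC hcb ?_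
      rw [lyu_eval_iter]
      refine lyu_crit f n c ?_
      have : (fun w : ℂ => f.eval w)^[n] = fun z => (f.comp^[n] X).eval z := by
        ext z; rw [lyu_eval_iter]
      rw [this, Polynomial.deriv]
      exact hc)
  have hFg : ∀ p ∈ Metric.ball y (8 * r), (fun w : ℂ => f.eval w)^[n] (g p) = p := by
    intro p hp
    rw [← lyu_eval_iter]; exact hPg p hp
  have hi : Set.InjOn g (Metric.ball y (8 * r)) := by
    intro p hp q hq h
    rw [← hFg p hp, h, hFg q hq]
  have hsub : ∀ p ∈ Metric.ball y r, Metric.ball p (4 * r) ⊆ Metric.ball y (8 * r) := by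
    intro p hp
    refine Metric.ball_subset_ball' ?_
    rw [Metric.mem_ball] at hp
    linarith
  have hyy : y ∈ Metric.ball y r := Metric.mem_ball_self hr
  have hr8 : Metric.ball y r ⊆ Metric.ball y (8 * r) := Metric.ball_subset_ball (by linarith)
  have hg4 := hg.mono (hsub y hyy)
  have hi4 := hi.mono (hsub y hyy)
  have ha : 0 < ‖deriv g y‖ := norm_pos_iff.2 (hg0 y (hr8 hyy))
  refine ⟨‖deriv g y‖, ha, ?_, ?_⟩
  · have hcl : Metric.closedBall y (r/2) ⊆ Metric.ball y r :=
      Metric.closedBall_subset_ball (by linarith)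
    have hev : ∀ᶠ z in nhdsWithin y {y}ᶜ, g z ≠ g y :=
      (hg.differentiableAt (Metric.isOpen_ball.mem_nhds (hr8 hyy))).hasDerivAt.eventually_ne
        (hg0 y (hr8 hyy))
    have hball := DiffContOnCl.ball_subset_image_closedBall (f := g) (z₀ := y) (r := r/2)
      (ε := ‖deriv g y‖ * r / 4000) (hg.diffContOnCl_ball (hcl.trans hr8)) (by positivity) (by
        intro p hp
        have hpn : ‖p - y‖ = r/2 := by simpa [dist_eq_norm] using hp
        have := lyu_lower hg4 hi4 hyy (hcl (Metric.sphere_subset_closedBall hp))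
        rw [norm_sub_rev, hpn, norm_sub_rev (g y)] at this
        linarith) (hev.frequently.filter_mono nhdsWithin_le_nhds)
    intro w hw
    rw [hgy] at hball
    obtain ⟨p, hp, rfl⟩ := hball (Metric.ball_subset_ball (by linarith) hw)
    rw [hFg p (hr8 (hcl hp))]
    exact Metric.ball_subset_closedBall (hcl hp)
  · have hJm : MeasurableSet (juliaSet (fun w : ℂ => f.eval w)) := isClosed_closure.measurableSet
    have hvol := lyu_vol (A := Metric.ball y r \ juliaSet (fun w : ℂ => f.eval w))
      Metric.isOpen_ball hg hi (measurableSet_ball.diff hJm)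
      (Set.sdiff_subset.trans hr8) (m := ‖deriv g y‖ / (2000 * Real.exp 2001)) (by positivity) (by
        rintro p ⟨hp, -⟩
        have hyp : y ∈ Metric.ball p r := by rwa [Metric.mem_ball, dist_comm]
        rcases eq_or_ne p y with rfl | hpy
        · have : (1:ℝ) ≤ Real.exp 2001 := Real.one_le_exp (by norm_num)
          exact div_le_self ha.le (by linarith)
        have hpos : 0 < ‖p - y‖ := norm_pos_iff.2 (sub_ne_zero.2 hpy)
        have h1 := lyu_lower hg4 hi4 hyy hp
        have h2 := lyu_deriv_ne hr (hg.mono (hsub p hp)) (hi.mono (hsub p hp))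
          (hg0 p (hr8 hp)) hyp
        rw [norm_sub_rev y p] at h1 h2
        rw [div_le_iff₀ (by positivity)]
        refine le_of_mul_le_mul_right (a := ‖p - y‖) ?_ hpos
        nlinarith)
    refine le_trans (mul_le_mul_right hm _) (hvol.trans (measure_mono ?_))
    rintro _ ⟨p, ⟨hp, hpJ⟩, rfl⟩
    refine ⟨?_, fun hgp => hpJ ?_⟩
    · have := lyu_deriv_ne hr hg4 hi4 (hg0 y (hr8 hyy)) hp
      rw [hgy] at this
      rw [Metric.mem_closedBall, dist_eq_norm]
      refine this.trans ?_
      rw [Metric.mem_ball, dist_eq_norm] at hp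
      gcongr
    · rw [← hFg p (hr8 hp)]
      exact lyu_maps_iter f n hgp

theorem lyu_density {J : Set ℂ} (hJ : MeasurableSet J) {z : ℂ}
    (hd : Tendsto (fun r => volume (J ∩ Metric.closedBall z r) / volume (Metric.closedBall z r))
      (nhdsWithin 0 (Set.Ioi 0)) (nhds 1)) {κ : ℝ} (hκ : 0 < κ) :
    ∃ ρ₀ > 0, ∀ ρ, 0 < ρ → ρ < ρ₀ →
      volume.real (Metric.closedBall z ρ \ J) < κ * ρ ^ 2 := by
  have h1 := (ENNReal.tendsto_toReal ENNReal.one_ne_top).comp hd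
  have h2 := h1.eventually_const_lt (show 1 - κ / Real.pi < (1 : ENNReal).toReal by
    have := Real.pi_pos
    have : 0 < κ / Real.pi := by positivity
    simp; linarith)
  obtain ⟨ρ₀, hρ₀, hb⟩ := mem_nhdsGT_iff_exists_Ioo_subset.1 h2
  refine ⟨ρ₀, hρ₀, fun ρ hρ hρ' => ?_⟩
  have h3 := hb ⟨hρ, hρ'⟩
  simp only [Set.mem_preimage, Function.comp, ENNReal.toReal_div, Set.mem_ofPred_eq] at h3
  have hv : (volume (Metric.closedBall z ρ)).toReal = Real.pi * ρ ^ 2 := by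
    rw [Complex.volume_closedBall]
    simp [hρ.le, mul_comm]
  have h4 := measureReal_inter_add_diff (μ := volume) (s := Metric.closedBall z ρ) (t := J) hJ
    measure_closedBall_lt_top.ne
  rw [hv] at h3
  simp only [Measure.real] at h4 ⊢
  rw [hv, Set.inter_comm] at h4
  have hpi := Real.pi_pos
  rw [lt_div_iff₀ (by positivity)] at h3
  have : (1 - κ / Real.pi) * (Real.pi * ρ ^ 2) = Real.pi * ρ ^ 2 - κ * ρ ^ 2 := by
    field_simp
  linarith

theorem postCritical_attracts_ae (f : Polynomial ℂ) (hdeg : 2 ≤ f.natDegree)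
    (V : Set ℂ) (hV : IsOpen V) (hPCV : postCriticalPoly f ⊆ V) :
    volume {z : ℂ | z ∈ juliaSet (fun w : ℂ => f.eval w) ∧
      {n : ℕ | (fun w : ℂ => f.eval w)^[n] z ∉ V}.Infinite} = 0 := by
  set J := juliaSet (fun w : ℂ => f.eval w) with hJ
  have hJcl : IsClosed J := isClosed_closure
  have hJm : MeasurableSet J := hJcl.measurableSet
  obtain ⟨R, hR0, hR⟩ := lyu_bounded f hdeg
  have hJc : IsCompact J := (isCompact_closedBall 0 R).of_isClosed_subset hJcl hR
  have hK : IsCompact (J \ V) := hJc.diff hV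
  obtain ⟨δ, hδ, hthick⟩ := hK.exists_thickening_subset_open
    (show IsOpen (postCriticalPoly f)ᶜ from isClosed_closure.isOpen_compl)
    (fun x hx h => hx.2 (hPCV h))
  set r := δ / 8 with hr
  have hr0 : 0 < r := by positivity
  obtain ⟨m', hm'0, hm'⟩ := lyu_measure_lower f hdeg hr0
  obtain ⟨m, hm0, hmm⟩ : ∃ m : ℝ, 0 < m ∧ ENNReal.ofReal m ≤ m' := by
    obtain ⟨q, hq0, hq⟩ := ENNReal.lt_iff_exists_nnreal_btwn.1 hm'0
    exact ⟨q, by exact_mod_cast hq0, by simpa using hq.le⟩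
  have hae := Besicovitch.ae_tendsto_measure_inter_div (volume : Measure ℂ) J
  rw [ae_restrict_iff' hJm, ae_iff] at hae
  refine measure_mono_null ?_ hae
  rintro z ⟨hzJ, hinf⟩ hd
  replace hd := hd hzJ
  set E := Real.exp 2001 with hE
  have hE0 : 0 < E := Real.exp_pos _
  -- per-time estimates
  have hbr : ∀ n ∈ {n : ℕ | (fun w : ℂ => f.eval w)^[n] z ∉ V}, ∃ a : ℝ, 0 < a ∧
      (∀ w ∈ Metric.ball z (a * r / 8000),
        (fun w : ℂ => f.eval w)^[n] w ∈ Metric.closedBall ((fun w : ℂ => f.eval w)^[n] z) r) ∧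
      ENNReal.ofReal ((a / (2000 * E)) ^ 2) * ENNReal.ofReal m ≤
        volume (Metric.closedBall z (E * a * r) \ J) := by
    intro n hn
    have hyJ := lyu_maps_iter f n hzJ
    refine lyu_branch f hr0 ?_ (hmm.trans (hm' _ hyJ))
    rw [Set.disjoint_left]
    intro p hp
    refine hthick (Metric.mem_thickening_iff.2 ⟨_, ⟨hyJ, hn⟩, ?_⟩)
    rw [Metric.mem_ball] at hp
    rw [hr] at hp
    linarith
  -- small derivative
  have hsmall : ∀ ε > 0, ∃ a : ℝ, 0 < a ∧ a < ε ∧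
      ENNReal.ofReal ((a / (2000 * E)) ^ 2) * ENNReal.ofReal m ≤
        volume (Metric.closedBall z (E * a * r) \ J) := by
    intro ε hε
    by_contra! hcon
    refine lyu_julia_repel f hzJ (s := ε * r / 8000) (R := R + r) (by positivity) (by positivity)
      hinf ?_
    intro n hn w hw
    obtain ⟨a, ha0, ha1, ha2⟩ := hbr n hn
    have hεa : ε ≤ a := by
      by_contra! h
      exact absurd ha2 (not_le.2 (hcon a ha0 h))
    have h1 := ha1 w (Metric.ball_subset_ball (by gcongr) hw)
    have h2 := hR (lyu_maps_iter f n hzJ)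
    rw [Metric.mem_closedBall, dist_eq_norm] at h1
    rw [mem_closedBall_zero_iff] at h2
    have := norm_add_le ((fun w : ℂ => f.eval w)^[n] w - (fun w : ℂ => f.eval w)^[n] z)
      ((fun w : ℂ => f.eval w)^[n] z)
    rw [sub_add_cancel] at this
    linarith
  obtain ⟨ρ₀, hρ₀, hdens⟩ := lyu_density hJm hd
    (κ := m / (2000 * E) ^ 2 / (E * r) ^ 2) (by positivity)
  obtain ⟨a, ha0, haε, hvol⟩ := hsmall (ρ₀ / (E * r)) (by positivity)
  have hlt := hdens (E * a * r) (by positivity) (by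
    rw [lt_div_iff₀ (by positivity)] at haε
    linarith)
  have hfin : volume (Metric.closedBall z (E * a * r) \ J) ≠ ⊤ :=
    ((measure_mono Set.sdiff_subset).trans_lt measure_closedBall_lt_top).ne
  rw [← ENNReal.ofReal_mul (by positivity), ENNReal.ofReal_le_iff_le_toReal hfin] at hvol
  have heq : m / (2000 * E) ^ 2 / (E * r) ^ 2 * (E * a * r) ^ 2 = (a / (2000 * E)) ^ 2 * m := by
    field_simp
  rw [heq] at hlt
  exact absurd hvol (not_le.2 hlt)
end

section
/- For every injective holomorphic map φ : U → ℂ with φ(0) = 0 and φ′(0) = 1, the image of the critical point −1/3 of P satisfies 0.22 ≤ |φ(−1/3)| ≤ 2; equivalently, the critical point of any map f = P ∘ φ^{−1} in the Inou–Shishikura class lies in the closed disk of radius 2 about 0 but outside the open disk of radius 0.22 about 0. -/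
open Complex

/-- The cubic polynomial `P(z) = z(1+z)²`. -/
noncomputable def Pcubic (z : ℂ) : ℂ := z * (1 + z) ^ 2

/-- The connected component of `P⁻¹(D(0,(4/27)e^{-4π}))` containing `-1`. -/
noncomputable def Bcomp : Set ℂ :=
  connectedComponentIn (Pcubic ⁻¹' Metric.ball 0 ((4 / 27) * Real.exp (-(4 * Real.pi)))) (-1)

/-- The Inou–Shishikura domain
`U = P⁻¹(D(0,(4/27)e^{4π})) ∖ ((-∞,-1] ∪ B)`. -/
noncomputable def Udom : Set ℂ :=
  (Pcubic ⁻¹' Metric.ball 0 ((4 / 27) * Real.exp (4 * Real.pi))) \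
    ({z : ℂ | z.im = 0 ∧ z.re ≤ -1} ∪ Bcomp)


lemma bessel_poly (N : ℕ) (b : ℕ → ℂ) :
    ∫ θ in (-Real.pi)..Real.pi, ‖∑ n ∈ Finset.range N, b n * (exp (θ * I)) ^ n‖ ^ 2
      = 2 * Real.pi * ∑ n ∈ Finset.range N, ‖b n‖ ^ 2 := by
  set p : Polynomial ℂ := ∑ n ∈ Finset.range N, Polynomial.monomial n (b n) with hp
  have hc : ∀ i, p.coeff i = if i ∈ Finset.range N then b i else 0 := by
    intro i
    simp [hp, Polynomial.finsetSum_coeff, Polynomial.coeff_monomial]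
  have h := p.sum_sq_norm_coeff_eq_circleAverage
  have h1 : ∑ i ∈ p.support, ‖p.coeff i‖ ^ 2 = ∑ n ∈ Finset.range N, ‖b n‖ ^ 2 := by
    have : p.support ⊆ Finset.range N := by
      intro i hi
      by_contra hcon
      rw [Polynomial.mem_support_iff, hc, if_neg hcon] at hi
      exact hi rfl
    rw [Finset.sum_subset this]
    · refine Finset.sum_congr rfl fun i hi => ?_
      rw [hc, if_pos hi]
    · intro i _ hi
      rw [Polynomial.notMem_support_iff.mp hi]; simp
  rw [h1, Real.circleAverage_def] at h
  rw [h]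
  have hper : Function.Periodic (fun θ : ℝ => ‖∑ n ∈ Finset.range N, b n * (exp (θ * I)) ^ n‖ ^ 2) (2 * Real.pi) := by
    intro θ
    have : exp (((θ + 2 * Real.pi : ℝ) : ℂ) * I) = exp (θ * I) := by
      push_cast
      rw [add_mul, Complex.exp_add, Complex.exp_two_pi_mul_I, mul_one]
    simp only [this]
  have h2 := hper.intervalIntegral_add_eq (-Real.pi) 0
  rw [show -Real.pi + 2 * Real.pi = Real.pi by ring, zero_add] at h2
  rw [h2, smul_eq_mul, ← mul_assoc, mul_inv_cancel₀ (by positivity), one_mul]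
  refine intervalIntegral.integral_congr fun θ _ => ?_
  simp [hp, Polynomial.eval_finsetSum, circleMap]

lemma bessel (a : ℕ → ℂ) (p : ℂ → ℂ) 
    (hs : ∀ z : ℂ, ‖z‖ < 1 → HasSum (fun n => a n * z ^ n) (p z)) (t : ℝ) (ht0 : 0 < t) (ht : t < 1) (N : ℕ) :
    2 * Real.pi * ∑ n ∈ Finset.range N, ‖a n‖ ^ 2 * t ^ (2 * n) ≤
    ∫ θ in (-Real.pi)..Real.pi, ‖p (t * exp (θ * I))‖ ^ 2 := by
  have hnorm : ∀ θ : ℝ, ‖(t : ℂ) * exp (θ * I)‖ = t := by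
    intro θ
    rw [norm_mul, Complex.norm_exp_ofReal_mul_I, mul_one, Complex.norm_real, Real.norm_of_nonneg ht0.le]
  have hsum : Summable (fun n => ‖a n‖ * t ^ n) := by
    have := (hs t (by rw [Complex.norm_real, Real.norm_of_nonneg ht0.le]; exact ht)).summable.norm
    refine this.congr fun n => ?_
    rw [norm_mul, norm_pow, Complex.norm_real, Real.norm_of_nonneg ht0.le]
  set C := ∑' n, ‖a n‖ * t ^ n
  have hlim : Filter.Tendsto (fun M : ℕ => ∫ θ in (-Real.pi)..Real.pi, ‖∑ n ∈ Finset.range M, (a n * t ^ n) * (exp (θ * I)) ^ n‖ ^ 2)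
      Filter.atTop (nhds (∫ θ in (-Real.pi)..Real.pi, ‖p (t * exp (θ * I))‖ ^ 2)) := by
    refine intervalIntegral.tendsto_integral_filter_of_dominated_convergence (fun _ => C ^ 2) ?_ ?_ ?_ ?_
    · refine Filter.Eventually.of_forall fun M => Continuous.aestronglyMeasurable ?_
      fun_prop
    · refine Filter.Eventually.of_forall fun M => Filter.Eventually.of_forall fun θ _ => ?_
      rw [Real.norm_of_nonneg (by positivity)]
      gcongr
      refine (norm_sum_le _ _).trans ?_
      refine le_trans (le_of_eq ?_) (hsum.sum_le_tsum (Finset.range M) fun i _ => by positivity)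
      refine Finset.sum_congr rfl fun n _ => ?_
      rw [norm_mul, norm_mul, norm_pow, norm_pow, Complex.norm_exp_ofReal_mul_I, Complex.norm_real, Real.norm_of_nonneg ht0.le]
      simp
    · exact intervalIntegrable_const
    · refine Filter.Eventually.of_forall fun θ _ => ?_
      have := (hs (t * exp (θ * I)) (by rw [hnorm]; exact ht)).tendsto_sum_nat
      refine (this.norm.pow 2).congr fun M => ?_
      simp only [mul_pow, mul_assoc]
  refine ge_of_tendsto hlim ?_
  filter_upwards [Filter.eventually_ge_atTop N] with M hM
  rw [bessel_poly]
  gcongr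
  refine le_trans (le_of_eq ?_) (Finset.sum_le_sum_of_subset_of_nonneg (Finset.range_mono hM) fun i _ _ => by positivity)
  refine Finset.sum_congr rfl fun n _ => ?_
  rw [norm_mul, norm_pow, Complex.norm_real, Real.norm_of_nonneg ht0.le]
  ring

lemma topo (h : ℂ → ℂ) (hd : DifferentiableOn ℂ h (Metric.ball 0 1)) (hinj : Set.InjOn h (Metric.ball 0 1))
    (h0 : h 0 = 0) (ρ m : ℝ) (hρ0 : 0 < ρ) (hρ : ρ < 1) (hm : 0 < m) (hb : ∀ z : ℂ, ‖z‖ = ρ → m ≤ ‖h z‖)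
    (z : ℂ) (hz : ‖z‖ < 1) (hz' : ρ ≤ ‖z‖) : m ≤ ‖h z‖ := by
  by_contra hcon
  push Not at hcon
  have hsub : Metric.ball (0 : ℂ) ρ ⊆ Metric.ball 0 1 := Metric.ball_subset_ball hρ.le
  have hcsub : Metric.closedBall (0 : ℂ) ρ ⊆ Metric.ball 0 1 := Metric.closedBall_subset_ball hρ
  have hopen : IsOpen (h '' Metric.ball 0 ρ) := by
    rcases (hd.analyticOnNhd Metric.isOpen_ball).is_constant_or_isOpen (convex_ball _ _).isPreconnected with ⟨w, hw⟩ | ho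
    · exfalso
      have h1 : (0 : ℂ) ∈ Metric.ball (0 : ℂ) 1 := by simp
      have h2 : (1 / 2 : ℂ) ∈ Metric.ball (0 : ℂ) 1 := by simp; norm_num
      have := hinj h1 h2 ((hw _ h1).trans (hw _ h2).symm)
      norm_num at this
    · exact ho _ hsub Metric.isOpen_ball
  have hclosed : IsClosed (h '' Metric.closedBall 0 ρ) :=
    ((isCompact_closedBall _ _).image_of_continuousOn (hd.continuousOn.mono hcsub)).isClosed
  have key : Metric.ball (0 : ℂ) m ⊆ h '' Metric.ball 0 ρ := by
    refine IsPreconnected.subset_left_of_subset_union hopen hclosed.isOpen_compl ?_ ?_ ?_ (convex_ball _ _).isPreconnected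
    · rw [Set.disjoint_compl_right_iff_subset]
      exact Set.image_mono Metric.ball_subset_closedBall
    · intro w hw
      by_cases hwc : w ∈ h '' Metric.closedBall 0 ρ
      · left
        obtain ⟨x, hx, rfl⟩ := hwc
        refine ⟨x, ?_, rfl⟩
        rw [mem_closedBall_zero_iff] at hx
        rw [mem_ball_zero_iff] at hw ⊢
        refine lt_of_le_of_ne hx fun he => ?_
        exact absurd (hb x he) (not_le.mpr hw)
      · right; exact hwc
    · exact ⟨0, by simpa using hm, 0, by simpa using hρ0, h0⟩
  obtain ⟨x, hx, hxe⟩ := key (show h z ∈ Metric.ball 0 m by simpa using hcon)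
  have := hinj (hsub hx) (by simpa using hz) hxe
  rw [mem_ball_zero_iff] at hx
  rw [this] at hx
  linarith

lemma det_smulRight_complex (c : ℂ) :
    |(((ContinuousLinearMap.toSpanSingleton ℂ c).restrictScalars ℝ : ℂ →L[ℝ] ℂ)).det| = ‖c‖ ^ 2 := by
  have := LinearMap.det_restrictScalars (R := ℝ) (S := ℂ) (A := ℂ) (f := ((ContinuousLinearMap.toSpanSingleton ℂ c) : ℂ →ₗ[ℂ] ℂ))
  rw [ContinuousLinearMap.det, ContinuousLinearMap.coe_restrictScalars, this]
  have h2 := ContinuousLinearMap.det_toSpanSingleton (𝕜 := ℂ) c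
  rw [ContinuousLinearMap.det] at h2
  rw [h2, Algebra.norm_complex_apply, Complex.normSq_eq_norm_sq, abs_of_nonneg (by positivity)]

noncomputable def PhiSum (v : ℕ → ℂ) (N : ℕ) (t : ℝ) : ℝ :=
  Real.pi * ((∑ n ∈ Finset.range N, ((n : ℝ) - 1) * ‖v n‖ ^ 2 * t ^ (2 * n)) / t ^ 2)

lemma PhiSum_deriv (v : ℕ → ℂ) (N : ℕ) (t : ℝ) (ht : 0 < t) :
    HasDerivAt (PhiSum v N)
      (t * (2 * Real.pi * (∑ n ∈ Finset.range N, ‖((n : ℂ) - 1) * v n‖ ^ 2 * t ^ (2 * n)) / t ^ 4)) t := by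
  have h1 : HasDerivAt (fun t : ℝ => ∑ n ∈ Finset.range N, ((n : ℝ) - 1) * ‖v n‖ ^ 2 * t ^ (2 * n))
      (∑ n ∈ Finset.range N, ((n : ℝ) - 1) * ‖v n‖ ^ 2 * (((2 * n : ℕ) : ℝ) * t ^ (2 * n - 1))) t := by
    refine HasDerivAt.fun_sum fun n _ => ?_
    exact (hasDerivAt_pow (2 * n) t).const_mul _
  have h2 := (h1.div (hasDerivAt_pow 2 t) (by positivity)).const_mul Real.pi
  refine h2.congr_deriv ?_
  have e1 : (∑ n ∈ Finset.range N, ((n : ℝ) - 1) * ‖v n‖ ^ 2 * (((2 * n : ℕ) : ℝ) * t ^ (2 * n - 1))) * t ^ 2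
     - (∑ n ∈ Finset.range N, ((n : ℝ) - 1) * ‖v n‖ ^ 2 * t ^ (2 * n)) * (2 * t)
     = 2 * t * ∑ n ∈ Finset.range N, ‖((n : ℂ) - 1) * v n‖ ^ 2 * t ^ (2 * n) := by
    rw [Finset.sum_mul, Finset.sum_mul, Finset.mul_sum, ← Finset.sum_sub_distrib]
    refine Finset.sum_congr rfl fun n _ => ?_
    have e2 : ‖((n : ℂ) - 1) * v n‖ ^ 2 = ((n : ℝ) - 1) ^ 2 * ‖v n‖ ^ 2 := by
      rw [norm_mul, mul_pow]
      congr 1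
      have : ((n : ℂ) - 1) = (((n : ℝ) - 1 : ℝ) : ℂ) := by push_cast; rfl
      rw [this, Complex.norm_real, Real.norm_eq_abs, sq_abs]
    rw [e2]
    rcases n with _ | n
    · simp; ring
    · rw [show 2 * (n + 1) - 1 = 2 * n + 1 by omega]
      push_cast
      ring
  simp only [Nat.cast_ofNat, Nat.add_one_sub_one, pow_one] 
  rw [e1]
  field_simp

open MeasureTheory in
lemma area_ge (g p : ℂ → ℂ) (v : ℕ → ℂ)
    (hs : ∀ z : ℂ, ‖z‖ < 1 → HasSum (fun n : ℕ => ((n : ℂ) - 1) * v n * z ^ n) (p z))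
    (hp : ∀ z : ℂ, z ≠ 0 → ‖z‖ < 1 → HasDerivAt g (p z / z ^ 2) z)
    (hpd : ContinuousOn p (Metric.ball 0 1))
    (ρ s : ℝ) (hρ : 0 < ρ) (hρs : ρ < s) (hs1 : s < 1)
    (hinj : Set.InjOn g {z : ℂ | ρ < ‖z‖ ∧ ‖z‖ < s}) (N : ℕ) :
    ENNReal.ofReal (PhiSum v N s - PhiSum v N ρ) ≤ volume (g '' {z : ℂ | ρ < ‖z‖ ∧ ‖z‖ < s}) := by
  set A := {z : ℂ | ρ < ‖z‖ ∧ ‖z‖ < s} with hA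
  have hAo : IsOpen A := (isOpen_lt continuous_const continuous_norm).inter (isOpen_lt continuous_norm continuous_const)
  have hAm : MeasurableSet A := hAo.measurableSet
  have hA0 : ∀ z ∈ A, z ≠ 0 := fun z hz h => by
    have := hz.1; rw [h, norm_zero] at this; linarith
  rw [← lintegral_abs_det_fderiv_eq_addHaar_image volume hAm
    (f' := fun z => (ContinuousLinearMap.toSpanSingleton ℂ (deriv g z)).restrictScalars ℝ) ?_ hinj]
  swap
  · intro z hz
    have := hp z (hA0 z hz) (hz.2.trans hs1)
    rw [this.deriv]
    exact (this.hasFDerivAt.restrictScalars ℝ).hasFDerivWithinAt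
  simp only [det_smulRight_complex]
  rw [← lintegral_indicator hAm, ← Complex.lintegral_comp_polarCoord_symm, polarCoord_target]
  set F : ℂ → ENNReal := A.indicator fun z => ENNReal.ofReal (‖deriv g z‖ ^ 2) with hF
  have hFm : Measurable F := by
    refine Measurable.indicator ?_ hAm
    have := measurable_deriv g
    fun_prop
  have hsymm : ∀ q : ℝ × ℝ, Complex.polarCoord.symm q = q.1 * exp (q.2 * I) := by
    intro q
    rw [Complex.polarCoord_symm_apply, Complex.exp_mul_I]
    push_cast; ring
  simp only [hsymm]
  rw [Measure.volume_eq_prod, ← Measure.prod_restrict, lintegral_prod]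
  swap
  · refine Measurable.aemeasurable ?_
    simp only [smul_eq_mul]
    refine Measurable.mul (by fun_prop) (hFm.comp ?_)
    exact Continuous.measurable (by fun_prop)
  have hIntble : IntervalIntegrable (fun t : ℝ => (t * (2 * Real.pi * (∑ n ∈ Finset.range N, ‖((n : ℂ) - 1) * v n‖ ^ 2 * t ^ (2 * n)) / t ^ 4))) volume ρ s := by
    refine ContinuousOn.intervalIntegrable ?_
    rw [Set.uIcc_of_le hρs.le]
    refine ContinuousOn.mul continuousOn_id (ContinuousOn.div (by fun_prop) (by fun_prop) ?_)
    intro t ht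
    have : 0 < t := hρ.trans_le ht.1
    positivity
  rw [← intervalIntegral.integral_eq_sub_of_hasDerivAt (f := PhiSum v N) (fun t ht => by
    rw [Set.uIcc_of_le hρs.le] at ht
    exact PhiSum_deriv v N t (hρ.trans_le ht.1)) hIntble]
  have hIntble' := hIntble
  rw [intervalIntegrable_iff_integrableOn_Ioo_of_le hρs.le] at hIntble'
  rw [intervalIntegral.integral_of_le hρs.le, integral_Ioc_eq_integral_Ioo,
    ofReal_integral_eq_lintegral_ofReal hIntble' ?_]
  swap
  · filter_upwards [ae_restrict_mem measurableSet_Ioo] with t ht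
    have : 0 < t := hρ.trans ht.1
    simp only [Pi.zero_apply]
    positivity
  refine le_trans ?_ (lintegral_mono_set (s := Set.Ioo ρ s) fun t ht => hρ.trans ht.1)
  refine setLIntegral_mono' measurableSet_Ioo fun t ht => ?_
  have ht0 : 0 < t := hρ.trans ht.1
  have ht1 : t < 1 := ht.2.trans hs1
  have hnorm : ∀ θ : ℝ, ‖(t : ℂ) * exp (θ * I)‖ = t := by
    intro θ
    rw [norm_mul, Complex.norm_exp_ofReal_mul_I, mul_one, Complex.norm_real, Real.norm_of_nonneg ht0.le]
  have hval : ∀ θ : ℝ, ENNReal.ofReal t • F (t * exp (θ * I)) =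
      ENNReal.ofReal (t * (‖p (t * exp (θ * I))‖ ^ 2 / t ^ 4)) := by
    intro θ
    have hmem : (t : ℂ) * exp (θ * I) ∈ A := by
      rw [hA, Set.mem_ofPred_eq, hnorm]; exact ht
    rw [hF, Set.indicator_of_mem hmem, smul_eq_mul, ← ENNReal.ofReal_mul ht0.le,
      (hp _ (hA0 _ hmem) (by rw [hnorm]; exact ht1)).deriv, norm_div, norm_pow, hnorm]
    congr 2
    rw [div_pow]; ring
  simp only [hval]
  have hcont : Continuous fun θ : ℝ => t * (‖p (t * exp (θ * I))‖ ^ 2 / t ^ 4) := by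
    have : Continuous fun θ : ℝ => p (t * exp (θ * I)) := by
      refine hpd.comp_continuous (by fun_prop) fun θ => ?_
      rw [mem_ball_zero_iff, hnorm]; exact ht1
    exact continuous_const.mul ((this.norm.pow 2).div_const _)
  rw [← ofReal_integral_eq_lintegral_ofReal]
  · apply ENNReal.ofReal_le_ofReal
    rw [← integral_Ioc_eq_integral_Ioo, ← intervalIntegral.integral_of_le (by linarith [Real.pi_pos]),
      intervalIntegral.integral_const_mul, intervalIntegral.integral_div]
    gcongr
    exact bessel _ p hs t ht0 ht1 N
  · exact (hcont.integrableOn_Icc (a := -Real.pi) (b := Real.pi)).mono_set Set.Ioo_subset_Icc_self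
  · refine Filter.Eventually.of_forall fun θ => ?_
    simp only [Pi.zero_apply]
    positivity

/-- Area theorem. -/
lemma area_theorem (V : ℂ → ℂ) (v : ℕ → ℂ) (hd : DifferentiableOn ℂ V (Metric.ball 0 1))
    (hV : ∀ z : ℂ, ‖z‖ < 1 → V z ≠ 0)
    (hs : ∀ z : ℂ, ‖z‖ < 1 → HasSum (fun n : ℕ => ((n : ℂ) - 1) * v n * z ^ n) (z * deriv V z - V z))
    (hinj : Set.InjOn (fun z => z / V z) (Metric.ball 0 1))
    (hv0 : v 0 = 1) (C δ : ℝ) (hC : 0 ≤ C) (hδ : 0 < δ) (hVC : ∀ z : ℂ, ‖z‖ < δ → ‖V z - 1‖ ≤ C * ‖z‖ ^ 3)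
    (N : ℕ) (s : ℝ) (hs0 : 0 < s) (hs1 : s < 1) :
    ∑ n ∈ Finset.range (N + 1), ((n : ℝ) - 1) * ‖v n‖ ^ 2 * s ^ (2 * n) ≤ 0 := by
  have hVd : ∀ z : ℂ, ‖z‖ < 1 → DifferentiableAt ℂ V z := fun z hz =>
    hd.differentiableAt (Metric.isOpen_ball.mem_nhds (by simpa using hz))
  have hmain : ∀ ρ : ℝ, 0 < ρ → ρ < s → ρ < δ →
      PhiSum v (N + 1) s ≤ Real.pi * (∑ n ∈ Finset.range N, (n : ℝ) * ‖v (n + 1)‖ ^ 2 * ρ ^ (2 * n) + 2 * C * ρ + C ^ 2 * ρ ^ 4) := by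
    intro ρ hρ hρs hρδ
    have hinj' : Set.InjOn (fun z => V z / z) {z : ℂ | ρ < ‖z‖ ∧ ‖z‖ < s} := by
      intro x hx y hy hxy
      refine hinj (by simpa using hx.2.trans hs1) (by simpa using hy.2.trans hs1) ?_
      have := congrArg (fun t => t⁻¹) hxy
      simpa using this
    have hg : ∀ z : ℂ, z ≠ 0 → ‖z‖ < 1 → HasDerivAt (fun z => V z / z) ((z * deriv V z - V z) / z ^ 2) z := by
      intro z hz hz1
      refine ((hVd z hz1).hasDerivAt.div (hasDerivAt_id z) hz).congr_deriv ?_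
      simp only [id]
      ring
    have hpc : ContinuousOn (fun z => z * deriv V z - V z) (Metric.ball 0 1) := by
      exact (continuousOn_id.mul (hd.deriv Metric.isOpen_ball).continuousOn).sub hd.continuousOn
    have h1 := area_ge (fun z => V z / z) (fun z => z * deriv V z - V z) v hs hg hpc ρ s hρ hρs hs1 hinj' (N + 1)
    have hsub : (fun z => V z / z) '' {z : ℂ | ρ < ‖z‖ ∧ ‖z‖ < s} ⊆ Metric.closedBall 0 ((1 + C * ρ ^ 3) / ρ) := by
      rintro _ ⟨z, hz, rfl⟩
      rw [mem_closedBall_zero_iff]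
      have hpos : 0 < 1 + C * ρ ^ 3 := by positivity
      have := topo (fun z => z / V z) (fun z hz => by
          rw [mem_ball_zero_iff] at hz
          exact (differentiableAt_id.div (hVd z hz) (hV z hz)).differentiableWithinAt) hinj (by simp) ρ (ρ / (1 + C * ρ ^ 3))
        hρ (hρs.trans hs1) (by positivity) (by
          intro x hx
          rw [norm_div, hx]
          have hx1 : ‖x‖ < 1 := by rw [hx]; exact hρs.trans hs1
          have hVx := hV x hx1
          have hle : ‖V x‖ ≤ 1 + C * ρ ^ 3 := by
            have h2 := hVC x (by rw [hx]; exact hρδ)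
            rw [hx] at h2
            have h3 := norm_add_le (V x - 1) 1
            rw [sub_add_cancel, norm_one] at h3
            linarith
          have : 0 < ‖V x‖ := norm_pos_iff.mpr hVx
          gcongr) z (hz.2.trans hs1) hz.1.le
      have h4 := inv_anti₀ (by positivity) this
      rw [← norm_inv, inv_div, inv_div] at h4
      exact h4
    have hpi : (NNReal.pi : ENNReal) = ENNReal.ofReal Real.pi := by
      rw [← NNReal.coe_real_pi, ENNReal.ofReal_coe_nnreal]
    have h2 := h1.trans (MeasureTheory.measure_mono hsub)
    rw [Complex.volume_closedBall, ← ENNReal.ofReal_pow (by positivity), hpi,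
      ← ENNReal.ofReal_mul (by positivity), ENNReal.ofReal_le_ofReal_iff (by positivity)] at h2
    have h3 : PhiSum v (N + 1) ρ = Real.pi * (∑ n ∈ Finset.range N, (n : ℝ) * ‖v (n + 1)‖ ^ 2 * ρ ^ (2 * n)) - Real.pi / ρ ^ 2 := by
      rw [PhiSum, Finset.sum_range_succ', hv0, add_div, Finset.sum_div, mul_add, sub_eq_add_neg]
      congr 1
      · congr 1
        refine Finset.sum_congr rfl fun n _ => ?_
        push_cast
        rw [show 2 * (n + 1) = 2 * n + 2 by ring, pow_add]
        field_simp
        ring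
      · simp
        ring
    rw [h3] at h2
    have h4 : ((1 + C * ρ ^ 3) / ρ) ^ 2 * Real.pi = Real.pi / ρ ^ 2 + Real.pi * (2 * C * ρ + C ^ 2 * ρ ^ 4) := by
      field_simp
      ring
    rw [h4] at h2
    linarith
  have hlim : Filter.Tendsto (fun ρ : ℝ => Real.pi * (∑ n ∈ Finset.range N, (n : ℝ) * ‖v (n + 1)‖ ^ 2 * ρ ^ (2 * n) + 2 * C * ρ + C ^ 2 * ρ ^ 4))
      (nhdsWithin 0 (Set.Ioi 0)) (nhds 0) := by
    have hc : Continuous (fun ρ : ℝ => Real.pi * (∑ n ∈ Finset.range N, (n : ℝ) * ‖v (n + 1)‖ ^ 2 * ρ ^ (2 * n) + 2 * C * ρ + C ^ 2 * ρ ^ 4)) := by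
      fun_prop
    have h := (hc.tendsto 0).mono_left (nhdsWithin_le_nhds (s := Set.Ioi 0))
    have hz : ∑ n ∈ Finset.range N, (n : ℝ) * ‖v (n + 1)‖ ^ 2 * (0 : ℝ) ^ (2 * n) = 0 := by
      refine Finset.sum_eq_zero fun n _ => ?_
      rcases n with _ | n
      · simp
      · rw [zero_pow (by omega), mul_zero]
    rw [hz] at h
    simpa using h
  have hle : PhiSum v (N + 1) s ≤ 0 := by
    refine ge_of_tendsto hlim ?_
    have h1 : ∀ᶠ ρ : ℝ in nhdsWithin 0 (Set.Ioi 0), ρ < min s δ :=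
      nhdsWithin_le_nhds (gt_mem_nhds (lt_min hs0 hδ))
    filter_upwards [h1, self_mem_nhdsWithin] with ρ h2 h3
    exact hmain ρ h3 (h2.trans_le (min_le_left _ _)) (h2.trans_le (min_le_right _ _))
  rw [PhiSum] at hle
  by_contra hcon
  push Not at hcon
  have : 0 < Real.pi * ((∑ n ∈ Finset.range (N + 1), ((n : ℝ) - 1) * ‖v n‖ ^ 2 * s ^ (2 * n)) / s ^ 2) := by
    have := Real.pi_pos
    positivity
  linarith

lemma coeff_estimate (v : ℕ → ℂ) (hv0 : v 0 = 1) (hv1 : v 1 = 0) (hv2 : v 2 = 0)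
    (hA : ∀ N : ℕ, ∀ s : ℝ, 0 < s → s < 1 →
      ∑ n ∈ Finset.range (N + 1), ((n : ℝ) - 1) * ‖v n‖ ^ 2 * s ^ (2 * n) ≤ 0)
    (z w : ℂ) (hz : ‖z‖ ≤ 0.6) (hw : HasSum (fun n => v n * z ^ n) w) : ‖w - 1‖ ≤ 0.191 := by
  have hA1 : ∀ N : ℕ, ∑ n ∈ Finset.range (N + 1), ((n : ℝ) - 1) * ‖v n‖ ^ 2 ≤ 0 := by
    intro N
    have hc : Continuous fun s : ℝ => ∑ n ∈ Finset.range (N + 1), ((n : ℝ) - 1) * ‖v n‖ ^ 2 * s ^ (2 * n) := by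
      fun_prop
    have h := (hc.tendsto 1).mono_left (nhdsWithin_le_nhds (s := Set.Iio 1))
    simp only [one_pow, mul_one] at h
    refine le_of_tendsto h ?_
    have h1 : ∀ᶠ s : ℝ in nhdsWithin 1 (Set.Iio 1), 0 < s := nhdsWithin_le_nhds (lt_mem_nhds one_pos)
    filter_upwards [h1, self_mem_nhdsWithin] with s h2 h3
    exact hA N s h2 h3
  have hB : ∀ N : ℕ, ∑ n ∈ Finset.range N, ((n : ℝ) + 2) * ‖v (n + 3)‖ ^ 2 ≤ 1 := by
    intro N
    have h := hA1 (N + 2)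
    rw [Finset.sum_range_succ', Finset.sum_range_succ', Finset.sum_range_succ'] at h
    simp only [hv0, hv1, hv2, Nat.zero_add] at h
    norm_num at h
    refine le_trans (le_of_eq (Finset.sum_congr rfl fun n _ => ?_)) h
    ring
  have hlim := (hw.tendsto_sum_nat.comp (Filter.tendsto_add_atTop_nat 3)).sub_const 1
  refine le_of_tendsto hlim.norm (Filter.Eventually.of_forall fun N => ?_)
  simp only [Function.comp]
  rw [Finset.sum_range_succ', Finset.sum_range_succ', Finset.sum_range_succ']
  simp only [hv0, hv1, hv2, Nat.zero_add, zero_mul, pow_zero, mul_one, add_zero, add_sub_cancel_right]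
  refine (norm_sum_le _ _).trans ?_
  have hterm : ∀ n : ℕ, ‖v (n + 1 + 1 + 1) * z ^ (n + 1 + 1 + 1)‖ ≤
      0.095 * (((n : ℝ) + 2) * ‖v (n + 3)‖ ^ 2) + (0.046656 / 0.76) * 0.36 ^ n := by
    intro n
    rw [norm_mul, norm_pow]
    have h1 : ‖z‖ ^ (n + 3) ≤ 0.216 * 0.6 ^ n := by
      calc ‖z‖ ^ (n + 3) ≤ 0.6 ^ (n + 3) := by gcongr
        _ = _ := by ring
    have h2 : (0.36 : ℝ) ^ n = (0.6 ^ n) ^ 2 := by rw [← pow_mul, mul_comm, pow_mul]; norm_num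
    rw [h2]
    set x := ‖v (n + 3)‖
    have hx : 0 ≤ x := norm_nonneg _
    set y : ℝ := 0.6 ^ n
    have h3 : x * ‖z‖ ^ (n + 3) ≤ x * (0.216 * y) := by gcongr
    have h4 : 0.095 * (2 * x ^ 2) ≤ 0.095 * (((n : ℝ) + 2) * x ^ 2) := by
      gcongr; linarith [Nat.cast_nonneg (α := ℝ) n]
    refine h3.trans ?_
    have h5 : x * (0.216 * y) ≤ 0.095 * (2 * x ^ 2) + (0.046656 / 0.76) * y ^ 2 := by
      nlinarith [sq_nonneg (0.38 * x - 0.216 * y)]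
    linarith
  refine (Finset.sum_le_sum fun n _ => hterm n).trans ?_
  rw [Finset.sum_add_distrib, ← Finset.mul_sum, ← Finset.mul_sum]
  have hg : ∑ n ∈ Finset.range N, (0.36 : ℝ) ^ n ≤ 1 / 0.64 := by
    have := (summable_geometric_of_lt_one (r := (0.36 : ℝ)) (by norm_num) (by norm_num)).sum_le_tsum (Finset.range N) (fun i _ => by positivity)
    rw [tsum_geometric_of_lt_one (by norm_num) (by norm_num)] at this
    norm_num at this ⊢
    exact this
  have := hB N
  linarith

noncomputable def spread (c : ℕ → ℂ) (n : ℕ) : ℂ := if 3 ∣ n then c (n / 3) else 0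

lemma spread_hasSum (c : ℕ → ℂ) (z x : ℂ) (h : HasSum (fun m => c m * (z ^ 3) ^ m) x) :
    HasSum (fun n => spread c n * z ^ n) x := by
  have hinj : Function.Injective (fun m : ℕ => 3 * m) := fun a b h => by simpa using h
  rw [← hinj.hasSum_iff]
  · refine h.congr_fun ?_
    intro m
    simp [spread, pow_mul]
  · intro n hn
    have : ¬ 3 ∣ n := fun ⟨m, hm⟩ => hn ⟨m, hm.symm⟩
    simp [spread, this]

lemma taylor_pair (w : ℂ → ℂ) (hw : DifferentiableOn ℂ w (Metric.ball 0 1)) :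
    ∃ c : ℕ → ℂ, c 0 = w 0 ∧ ∀ z : ℂ, ‖z‖ < 1 → HasSum (fun n => c n * z ^ n) (w z) ∧
      HasSum (fun n : ℕ => (n : ℂ) * c n * z ^ n) (z * deriv w z) := by
  refine ⟨fun n => (n.factorial : ℂ)⁻¹ * iteratedDeriv n w 0, by simp, fun z hz => ⟨?_, ?_⟩⟩
  · have := Complex.hasSum_taylorSeries_on_ball hw (z := z) (by simpa using hz)
    refine this.congr_fun ?_
    intro n
    simp; ring
  · have := Complex.hasSum_taylorSeries_on_ball (hw.deriv Metric.isOpen_ball) (z := z) (by simpa using hz)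
    have h2 := this.mul_left z
    rw [← hasSum_nat_add_iff' 1]
    simp only [Finset.range_one, Finset.sum_singleton, Nat.cast_zero, zero_mul, sub_zero]
    refine h2.congr_fun ?_
    intro n
    rw [← iteratedDeriv_succ', Nat.factorial_succ]
    have : (n.factorial : ℂ) ≠ 0 := by exact_mod_cast n.factorial_ne_zero
    have h3 : ((n : ℂ) + 1) ≠ 0 := by exact_mod_cast n.succ_ne_zero
    simp only [sub_zero, smul_eq_mul]
    push_cast
    field_simp
    ring

lemma cube_root (F : ℂ → ℂ) (hF : DifferentiableOn ℂ F (Metric.ball 0 1)) (hF0 : F 0 = 1)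
    (hne : ∀ z : ℂ, ‖z‖ < 1 → F z ≠ 0) :
    ∃ w : ℂ → ℂ, DifferentiableOn ℂ w (Metric.ball 0 1) ∧ w 0 = 1 ∧ ∀ z : ℂ, ‖z‖ < 1 → w z ^ 3 * F z = 1 := by
  have hq : DifferentiableOn ℂ (fun z => deriv F z / F z) (Metric.ball 0 1) :=
    (hF.deriv Metric.isOpen_ball).div hF fun z hz => hne z (by simpa using hz)
  obtain ⟨G, hG⟩ := hq.isExactOn_ball
  refine ⟨fun z => exp (-(G z - G 0) / 3), ?_, by simp, ?_⟩
  · intro z hz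
    have := (hG z hz).differentiableAt
    exact (by fun_prop : DifferentiableAt ℂ (fun z => exp (-(G z - G 0) / 3)) z).differentiableWithinAt
  · have hconst : ∀ z ∈ Metric.ball (0 : ℂ) 1, exp (-(G z - G 0)) * F z = exp (-(G 0 - G 0)) * F 0 := by
      intro z hz
      refine (convex_ball (0 : ℂ) 1).is_const_of_fderivWithin_eq_zero (𝕜 := ℂ) (f := fun z => exp (-(G z - G 0)) * F z) ?_ ?_ hz (by simp)
      · intro x hx
        have h1 := (hG x hx).differentiableAt
        have h2 := hF.differentiableAt (Metric.isOpen_ball.mem_nhds hx)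
        exact (by fun_prop : DifferentiableAt ℂ (fun z => exp (-(G z - G 0)) * F z) x).differentiableWithinAt
      · intro x hx
        have h2 := (hF.differentiableAt (Metric.isOpen_ball.mem_nhds hx)).hasDerivAt
        have h3 := ((((hG x hx).sub_const (G 0)).neg).cexp).mul h2
        have hx' := hne x (by simpa using hx)
        have h4 : HasDerivAt (fun z => exp (-(G z - G 0)) * F z) 0 x := by
          refine h3.congr_deriv ?_
          simp only [Pi.neg_apply]
          field_simp
          ring
        rw [fderivWithin_of_isOpen Metric.isOpen_ball hx, ← toSpanSingleton_deriv, h4.deriv]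
        simp
    intro z hz
    have := hconst z (by simpa using hz)
    rw [hF0] at this
    simp only [sub_self, neg_zero, exp_zero, mul_one] at this
    rw [← this, ← Complex.exp_nat_mul]
    congr 2
    push_cast; ring

lemma growth (f : ℂ → ℂ) (hd : DifferentiableOn ℂ f (Metric.ball 0 1)) (hinj : Set.InjOn f (Metric.ball 0 1))
    (h0 : f 0 = 0) (h1 : deriv f 0 = 1) (ζ : ℂ) (hζ : ‖ζ‖ ≤ 0.216) :
    ∃ u : ℂ, u ^ 3 * f ζ = ζ ∧ ‖u - 1‖ ≤ 0.191 := by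
  have h0mem : (0 : ℂ) ∈ Metric.ball (0 : ℂ) 1 := by simp
  have hFeq : ∀ z, z * dslope f 0 z = f z := by
    intro z
    have := sub_smul_dslope f 0 z
    simpa [h0] using this
  have hFd : DifferentiableOn ℂ (dslope f 0) (Metric.ball 0 1) :=
    (Complex.differentiableOn_dslope (Metric.ball_mem_nhds 0 one_pos)).mpr hd
  have hF0 : dslope f 0 0 = 1 := by rw [dslope_same, h1]
  obtain ⟨w, hwd, hw0, hw⟩ := cube_root (dslope f 0) hFd hF0 (by
    intro z hz hcon
    have h2 := hFeq z
    rw [hcon, mul_zero] at h2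
    have : z = 0 := hinj (by simpa using hz) h0mem (by rw [← h2, h0])
    rw [this, hF0] at hcon
    exact one_ne_zero hcon)
  have hwne : ∀ z : ℂ, ‖z‖ < 1 → w z ≠ 0 := fun z hz hcon => by
    have := hw z hz
    rw [hcon] at this
    norm_num at this
  have hwf : ∀ z : ℂ, ‖z‖ < 1 → w z ^ 3 * f z = z := fun z hz => by
    rw [← hFeq, mul_left_comm, hw z hz, mul_one]
  have hcube : ∀ z : ℂ, ‖z‖ < 1 → ‖z ^ 3‖ < 1 := fun z hz => by
    rw [norm_pow]; exact pow_lt_one₀ (norm_nonneg _) hz (by norm_num)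
  obtain ⟨c, hc0, hc⟩ := taylor_pair w hwd
  have hwda : ∀ z : ℂ, ‖z‖ < 1 → HasDerivAt w (deriv w z) z := fun z hz =>
    (hwd.differentiableAt (Metric.isOpen_ball.mem_nhds (by simpa using hz))).hasDerivAt
  have hVd : ∀ z : ℂ, ‖z‖ < 1 → HasDerivAt (fun z => w (z ^ 3)) (deriv w (z ^ 3) * (3 * z ^ 2)) z := by
    intro z hz
    have := (hwda _ (hcube z hz)).comp z (hasDerivAt_pow 3 z)
    exact this.congr_deriv (by simp)
  obtain ⟨z, hz⟩ : ∃ z : ℂ, z ^ 3 = ζ := IsAlgClosed.exists_pow_nat_eq ζ (by norm_num)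
  have hz6 : ‖z‖ ≤ 0.6 := by
    by_contra hcon
    push Not at hcon
    have : (0.6 : ℝ) ^ 3 < ‖z‖ ^ 3 := by gcongr
    rw [← norm_pow, hz] at this
    norm_num at this hζ
    linarith
  have hz1 : ‖z‖ < 1 := by linarith [show (0.6 : ℝ) < 1 by norm_num]
  refine ⟨w ζ, hwf ζ (by linarith [show (0.216 : ℝ) < 1 by norm_num]), ?_⟩
  have hbig : ∃ C δ : ℝ, 0 ≤ C ∧ 0 < δ ∧ ∀ z : ℂ, ‖z‖ < δ → ‖w (z ^ 3) - 1‖ ≤ C * ‖z‖ ^ 3 := by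
    have hO := (hwda 0 (by simp)).isBigO_sub
    obtain ⟨C, hC, hCO⟩ := hO.exists_nonneg
    rw [Asymptotics.isBigOWith_iff, Metric.eventually_nhds_iff] at hCO
    obtain ⟨ε, hε, hCε⟩ := hCO
    refine ⟨C, min ε 1, hC, by positivity, fun z hz => ?_⟩
    have hz1 : ‖z‖ < 1 := hz.trans_le (min_le_right _ _)
    have := hCε (y := z ^ 3) (by
      rw [dist_zero_right, norm_pow]
      calc ‖z‖ ^ 3 ≤ ‖z‖ := pow_le_of_le_one (norm_nonneg _) hz1.le (by norm_num)
        _ < ε := hz.trans_le (min_le_left _ _))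
    rwa [hw0, sub_zero, norm_pow] at this
  obtain ⟨C, δ, hC, hδ, hCδ⟩ := hbig
  rw [← hz]
  refine coeff_estimate (spread c) (by simp [spread, hc0, hw0]) (by simp [spread]) (by simp [spread]) ?_ z _ hz6
    (spread_hasSum c z _ (hc _ (hcube z hz1)).1)
  intro N s hs0 hs1
  refine area_theorem (fun z => w (z ^ 3)) (spread c) (fun z hz => (hVd z (by simpa using hz)).differentiableAt.differentiableWithinAt)
    (fun z hz => hwne _ (hcube z hz)) ?_ ?_ (by simp [spread, hc0, hw0]) C δ hC hδ hCδ N s hs0 hs1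
  · intro z hz
    have h2 := ((hc _ (hcube z hz)).2.mul_left 3).sub (hc _ (hcube z hz)).1
    have h3 := spread_hasSum (fun m => (3 * (m : ℂ) - 1) * c m) z _ (h2.congr_fun (fun m => by ring))
    rw [(hVd z hz).deriv]
    have e : z * (deriv w (z ^ 3) * (3 * z ^ 2)) - w (z ^ 3) = 3 * (z ^ 3 * deriv w (z ^ 3)) - w (z ^ 3) := by ring
    rw [e]
    refine h3.congr_fun ?_
    · intro n
      by_cases hn : 3 ∣ n
      · obtain ⟨m, rfl⟩ := hn
        simp [spread]
      · simp [spread, hn]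
  · intro x hx y hy hxy
    have hx1 : ‖x‖ < 1 := by simpa using hx
    have hy1 : ‖y‖ < 1 := by simpa using hy
    have hk : ∀ x : ℂ, ‖x‖ < 1 → (x / w (x ^ 3)) ^ 3 = f (x ^ 3) := by
      intro x hx
      have h5 := hwf _ (hcube x hx)
      have h6 := hwne _ (hcube x hx)
      rw [div_pow, div_eq_iff (pow_ne_zero 3 h6), mul_comm, h5]
    simp only [] at hxy
    have h4 : f (x ^ 3) = f (y ^ 3) := by rw [← hk x hx1, ← hk y hy1, hxy]
    have h5 : x ^ 3 = y ^ 3 := hinj (by simpa using hcube x hx1) (by simpa using hcube y hy1) h4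
    rw [h5] at hxy
    have h6 := hwne _ (hcube y hy1)
    field_simp at hxy
    exact hxy

lemma moebius_bounds (z : ℂ) (hz : ‖z‖ < 1) :
    1 - 0.9 * z ≠ 0 ∧ ‖1.85 * z / (1 - 0.9 * z)‖ ≤ 18.5 ∧ -0.98 < (1.85 * z / (1 - 0.9 * z)).re := by
  have h1 : (0.1 : ℝ) ≤ ‖1 - 0.9 * z‖ := by
    have h := norm_sub_norm_le (1 : ℂ) (0.9 * z)
    rw [norm_one, norm_mul] at h
    have : ‖(0.9 : ℂ)‖ = 0.9 := by norm_num
    rw [this] at h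
    linarith
  have hne : 1 - 0.9 * z ≠ 0 := norm_pos_iff.mp (lt_of_lt_of_le (by norm_num) h1)
  refine ⟨hne, ?_, ?_⟩
  · rw [norm_div, div_le_iff₀ (by linarith), norm_mul]
    have : ‖(1.85 : ℂ)‖ = 1.85 := by norm_num
    rw [this]
    linarith
  · have hsq : z.re ^ 2 + z.im ^ 2 < 1 := by
      have h2 : ‖z‖ ^ 2 < 1 := by nlinarith [norm_nonneg z]
      rw [← Complex.normSq_eq_norm_sq, Complex.normSq_apply] at h2
      linarith
    have hre : -1 < z.re := by nlinarith [sq_nonneg z.im]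
    have hpos : 0 < Complex.normSq (1 - 0.9 * z) := Complex.normSq_pos.mpr hne
    have e1 : (1.85 * z).re = 1.85 * z.re := by
      have : (1.85 : ℂ) = ((1.85 : ℝ) : ℂ) := by norm_num
      rw [this, Complex.re_ofReal_mul]
    have e2 : (1.85 * z).im = 1.85 * z.im := by
      have : (1.85 : ℂ) = ((1.85 : ℝ) : ℂ) := by norm_num
      rw [this, Complex.im_ofReal_mul]
    have e3 : (1 - 0.9 * z).re = 1 - 0.9 * z.re := by
      have : (0.9 : ℂ) = ((0.9 : ℝ) : ℂ) := by norm_num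
      rw [this, Complex.sub_re, Complex.re_ofReal_mul, Complex.one_re]
    have e4 : (1 - 0.9 * z).im = - (0.9 * z.im) := by
      have : (0.9 : ℂ) = ((0.9 : ℝ) : ℂ) := by norm_num
      rw [this, Complex.sub_im, Complex.im_ofReal_mul, Complex.one_im, zero_sub]
    rw [Complex.div_re, ← add_div, lt_div_iff₀ hpos, Complex.normSq_apply, e1, e2, e3, e4]
    rw [Complex.normSq_apply, e3, e4] at hpos
    nlinarith

lemma Bcomp_sub : Bcomp ⊆ Metric.ball (-1) 0.02 := by
  have hexp : Real.exp (-(4 * Real.pi)) < 0.0025 := by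
    have h1 : Real.exp (-(4 * Real.pi)) ≤ Real.exp (-12) := Real.exp_le_exp.mpr (by linarith [Real.pi_gt_three])
    have h2 : Real.exp (-12) = Real.exp (-1) ^ 12 := by rw [← Real.exp_nat_mul]; norm_num
    have h3 : Real.exp (-1) < 0.37 := lt_trans Real.exp_neg_one_lt_d9 (by norm_num)
    have h4 : Real.exp (-1) ^ 12 < 0.37 ^ 12 := by
      have := Real.exp_pos (-1)
      gcongr
    have h5 : (0.37 : ℝ) ^ 12 < 0.0025 := by norm_num
    linarith
  have hno : ∀ z ∈ Bcomp, ‖z + 1‖ ≠ 0.02 := by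
    intro z hz he
    have h1 := connectedComponentIn_subset _ _ (show z ∈ connectedComponentIn _ _ from hz)
    rw [Set.mem_preimage, mem_ball_zero_iff, Pcubic, norm_mul, norm_pow, add_comm 1 z, he] at h1
    have h2 : 0.98 ≤ ‖z‖ := by
      have h3 := norm_sub_le (z + 1) z
      rw [add_sub_cancel_left, norm_one, he] at h3
      norm_num at h3 ⊢
      linarith
    nlinarith
  refine IsPreconnected.subset_left_of_subset_union Metric.isOpen_ball
    (v := (Metric.closedBall (-1) 0.02)ᶜ) Metric.isClosed_closedBall.isOpen_compl ?_ ?_ ?_ isPreconnected_connectedComponentIn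
  · rw [Set.disjoint_compl_right_iff_subset]
    exact Metric.ball_subset_closedBall
  · intro z hz
    have := hno z hz
    rcases lt_or_gt_of_ne this with h | h
    · left
      rw [Metric.mem_ball, dist_eq_norm, sub_neg_eq_add]; exact h
    · right
      rw [Set.mem_compl_iff, Metric.mem_closedBall, dist_eq_norm, sub_neg_eq_add, not_le]; exact h
  · refine ⟨-1, mem_connectedComponentIn ?_, by simp; norm_num⟩
    rw [Set.mem_preimage, mem_ball_zero_iff, Pcubic]
    simp
    positivity

lemma mem_Udom (z : ℂ) (h1 : ‖z‖ < 19) (h2 : -0.98 < z.re) : z ∈ Udom := by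
  have hexp : 100000 < Real.exp (4 * Real.pi) := by
    have h1 : Real.exp 12 ≤ Real.exp (4 * Real.pi) := Real.exp_le_exp.mpr (by linarith [Real.pi_gt_three])
    have h2 : Real.exp 12 = Real.exp 1 ^ 12 := by rw [← Real.exp_nat_mul]; norm_num
    have h3 : 2.7 < Real.exp 1 := lt_trans (by norm_num) Real.exp_one_gt_d9
    have h4 : (2.7 : ℝ) ^ 12 < Real.exp 1 ^ 12 := by gcongr
    have h5 : (100000 : ℝ) < 2.7 ^ 12 := by norm_num
    linarith
  refine ⟨?_, ?_⟩
  · rw [Set.mem_preimage, mem_ball_zero_iff, Pcubic, norm_mul, norm_pow]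
    have h3 : ‖1 + z‖ ≤ 20 := by
      have := norm_add_le 1 z
      rw [norm_one] at this
      linarith
    have h4 : ‖z‖ * ‖1 + z‖ ^ 2 ≤ 19 * 20 ^ 2 := by gcongr
    norm_num at h4
    linarith
  · rintro (h | h)
    · have := h.2; linarith
    · have h3 := Bcomp_sub h
      rw [Metric.mem_ball, dist_eq_norm, sub_neg_eq_add] at h3
      have h4 := (abs_le.mp (Complex.abs_re_le_norm (z + 1)))
      rw [Complex.add_re, Complex.one_re] at h4
      linarith [h4.2]

/-- The critical point of any map in the Inou–Shishikura class lies in the closed annulus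
`0.22 ≤ |z| ≤ 2`: if `φ : U → ℂ` is injective holomorphic with `φ(0) = 0`, `φ'(0) = 1`,
then `0.22 ≤ |φ(-1/3)| ≤ 2`. -/
theorem critical_point_location (φ : ℂ → ℂ)
    (hd : DifferentiableOn ℂ φ Udom) (hinj : Set.InjOn φ Udom)
    (h0 : φ 0 = 0) (h1 : deriv φ 0 = 1) :
    (0.22 : ℝ) ≤ ‖φ (-1 / 3)‖ ∧ ‖φ (-1 / 3)‖ ≤ 2 := by
  set M : ℂ → ℂ := fun z => 1.85 * z / (1 - 0.9 * z) with hM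
  set W : Set ℂ := {z : ℂ | ‖z‖ < 19 ∧ -0.98 < z.re} with hW
  have hWo : IsOpen W := (isOpen_lt continuous_norm continuous_const).inter (isOpen_lt continuous_const Complex.continuous_re)
  have hWU : W ⊆ Udom := fun z hz => mem_Udom z hz.1 hz.2
  have hMW : ∀ z : ℂ, ‖z‖ < 1 → M z ∈ W := fun z hz =>
    ⟨lt_of_le_of_lt (moebius_bounds z hz).2.1 (by norm_num), (moebius_bounds z hz).2.2⟩
  have hφd : ∀ z ∈ W, DifferentiableAt ℂ φ z := fun z hz =>
    (hd.mono hWU).differentiableAt (hWo.mem_nhds hz)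
  have hMd : ∀ z : ℂ, ‖z‖ < 1 → HasDerivAt M (1.85 / (1 - 0.9 * z) ^ 2) z := by
    intro z hz
    have hne := (moebius_bounds z hz).1
    have h2 : HasDerivAt (fun z : ℂ => 1.85 * z) 1.85 z := by
      simpa using (hasDerivAt_id z).const_mul (1.85 : ℂ)
    have h3 : HasDerivAt (fun z : ℂ => 1 - 0.9 * z) (-0.9) z := by
      simpa using ((hasDerivAt_id z).const_mul (0.9 : ℂ)).const_sub 1
    refine (h2.div h3 hne).congr_deriv ?_
    congr 1
    ring
  have hM0 : M 0 = 0 := by simp [hM]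
  have hfd : ∀ z : ℂ, ‖z‖ < 1 → HasDerivAt (fun z => φ (M z) / 1.85)
      (deriv φ (M z) * (1.85 / (1 - 0.9 * z) ^ 2) / 1.85) z := fun z hz =>
    ((hφd _ (hMW z hz)).hasDerivAt.comp z (hMd z hz)).div_const _
  have hMinj : ∀ x y : ℂ, ‖x‖ < 1 → ‖y‖ < 1 → M x = M y → x = y := by
    intro x y hx hy hxy
    have hxn := (moebius_bounds x hx).1
    have hyn := (moebius_bounds y hy).1
    simp only [hM] at hxy
    rw [div_eq_div_iff hxn hyn] at hxy
    have : (1.85 : ℂ) * (x - y) = 0 := by linear_combination hxy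
    rcases mul_eq_zero.mp this with h | h
    · norm_num at h
    · exact sub_eq_zero.mp h
  obtain ⟨u, hu, hu1⟩ := growth (fun z => φ (M z) / 1.85)
    (fun z hz => (hfd z (by simpa using hz)).differentiableAt.differentiableWithinAt)
    (by
      intro x hx y hy hxy
      have hx1 : ‖x‖ < 1 := by simpa using hx
      have hy1 : ‖y‖ < 1 := by simpa using hy
      refine hMinj x y hx1 hy1 (hinj (hWU (hMW x hx1)) (hWU (hMW y hy1)) ?_)
      exact (div_left_inj' (by norm_num)).mp hxy)
    (by simp [hM0, h0])
    (by rw [(hfd 0 (by simp)).deriv, hM0, h1]; norm_num)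
    (-1 / 4.65) (by norm_num)
  have hMv : M (-1 / 4.65) = -1 / 3 := by
    simp only [hM]; norm_num
  simp only [hMv] at hu
  have hnu := congrArg (fun t : ℂ => ‖t‖) hu
  simp only [norm_mul, norm_pow, norm_div] at hnu
  have e1 : ‖(1.85 : ℂ)‖ = 1.85 := by norm_num
  have e2 : ‖(-1 : ℂ)‖ / ‖(4.65 : ℂ)‖ = 1 / 4.65 := by norm_num
  rw [e1, e2] at hnu
  have hub : ‖u‖ ≤ 1.191 := by
    have := norm_add_le (u - 1) 1
    rw [sub_add_cancel, norm_one] at this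
    linarith
  have hlb : 0.809 ≤ ‖u‖ := by
    have := norm_sub_norm_le (1 : ℂ) (1 - u)
    rw [sub_sub_cancel, norm_one, norm_sub_rev] at this
    linarith
  have hub3 : ‖u‖ ^ 3 ≤ 1.191 ^ 3 := by gcongr
  have hlb3 : 0.809 ^ 3 ≤ ‖u‖ ^ 3 := by gcongr
  have hpos := norm_nonneg (φ (-1 / 3))
  set X := ‖φ (-1 / 3)‖
  set k := ‖u‖ ^ 3
  have hkX : k * X = 1.85 / 4.65 := by
    have : k * X = 1.85 * (k * (X / 1.85)) := by ring
    rw [this, hnu]; ring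
  norm_num at hub3 hlb3 hkX
  constructor
  · by_contra hcon
    push Not at hcon
    norm_num at hcon
    nlinarith
  · by_contra hcon
    push Not at hcon
    nlinarith
end
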